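/- arXiv:1511.07039 — 11 statements merged into one kernel-verified Lean document; each statement's English description precedes it below -/
import Mathlib

section
/- Let γ, l, c₀ be real parameters with γ > 1. Suppose a, b, c, d, A, B, C are real-valued differentiable functions on a real interval J solving the system (S), and suppose 𝒟(t) := 4A(t)C(t) − B(t)² > 0 for all t ∈ J. Then the function t ↦ (b(t) − c(t) − l) · 𝒟(t)^(−1/(2γ)) is constant on J (equivalently, b − c − l = const · 𝒟^(1/(2γ)) along every such solution). -/
/-- The first integral `b - c - l = const · (4AC - B²)^(1/(2γ))` of the
full system (S) of the 2D rotating compressible Euler equations with linear velocity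
profile: the quantity `(b - c - l) · 𝒟^(-1/(2γ))` is constant on any interval `J`
on which `(a,b,c,d,A,B,C)` solves (S) and `𝒟 = 4AC - B² > 0`. -/
theorem stmt_0 (γ l c₀ : ℝ) (hγ : 1 < γ) (J : Set ℝ) (hJ : J.OrdConnected)
    (a b c d A B C : ℝ → ℝ)
    (hsol : ∀ t ∈ J,
      HasDerivAt a (-(a t) ^ 2 - b t * c t + l * c t - 2 * c₀ * A t) t ∧
      HasDerivAt b (-(a t + d t) * b t + l * d t - c₀ * B t) t ∧
      HasDerivAt c (-(a t + d t) * c t - l * a t - c₀ * B t) t ∧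
      HasDerivAt d (-(d t) ^ 2 - b t * c t - l * b t - 2 * c₀ * C t) t ∧
      HasDerivAt A (-2 * a t * A t - c t * B t - (γ - 1) * (a t + d t) * A t) t ∧
      HasDerivAt B (-2 * b t * A t - 2 * c t * C t - γ * (a t + d t) * B t) t ∧
      HasDerivAt C (-2 * d t * C t - b t * B t - (γ - 1) * (a t + d t) * C t) t)
    (hD : ∀ t ∈ J, 0 < 4 * A t * C t - (B t) ^ 2) :
    ∀ s ∈ J, ∀ t ∈ J,
      (b s - c s - l) * (4 * A s * C s - (B s) ^ 2) ^ (-(1 / (2 * γ))) =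
      (b t - c t - l) * (4 * A t * C t - (B t) ^ 2) ^ (-(1 / (2 * γ))) := by
  have key : ∀ t ∈ J, HasDerivWithinAt
      (fun t => (b t - c t - l) * (4 * A t * C t - (B t) ^ 2) ^ (-(1 / (2 * γ)))) 0 J t := by
    intro t ht
    obtain ⟨-, hb, hc, -, hA, hB, hC⟩ := hsol t ht
    have hpos := hD t ht
    have hd : HasDerivAt (fun t => 4 * A t * C t - (B t) ^ 2)
        (-(2 * γ) * (a t + d t) * (4 * A t * C t - (B t) ^ 2)) t := by
      refine (((hA.const_mul 4).mul hC).sub (hB.pow 2)).congr_deriv ?_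
      push_cast
      ring
    have hw : HasDerivAt (fun t => b t - c t - l) (-(a t + d t) * (b t - c t - l)) t := by
      refine ((hb.sub hc).sub_const l).congr_deriv ?_
      ring
    have hp := hd.rpow_const (p := -(1 / (2 * γ))) (Or.inl hpos.ne')
    refine ((hw.mul hp).congr_deriv ?_).hasDerivWithinAt
    rw [Real.rpow_sub_one hpos.ne']
    have hγ0 : γ ≠ 0 := by linarith
    have hne := hpos.ne'
    generalize (4 * A t * C t - (B t) ^ 2) ^ (-(1 / (2 * γ))) = P
    generalize 4 * A t * C t - (B t) ^ 2 = D at hne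
    field_simp
    ring
  intro s hs t ht
  have h := hJ.convex.norm_image_sub_le_of_norm_hasDerivWithin_le (C := 0) key
    (fun x _ => by simp) ht hs
  rw [zero_mul] at h
  exact sub_eq_zero.mp (norm_le_zero_iff.mp h)
end

section
/- Let T ∈ (0, ∞], let a, b, c, d : [0,T) → ℝ be continuous, and let ρ : [0,T) × ℝ² → ℝ be continuously differentiable with support contained in [0,T) × K for some compact set K ⊂ ℝ². Suppose ρ satisfies the continuity equation ∂ₜρ + ∂_{x₁}(ρ u₁) + ∂_{x₂}(ρ u₂) = 0, where u₁(t,x) = a(t)x₁ + b(t)x₂ and u₂(t,x) = c(t)x₁ + d(t)x₂. Define G_{x₁}(t) = (1/2)∫_{ℝ²} ρ x₁² dx, G_{x₂}(t) = (1/2)∫_{ℝ²} ρ x₂² dx, G_{x₁x₂}(t) = (1/2)∫_{ℝ²} ρ x₁x₂ dx. Then for all t ∈ [0,T): G_{x₁}' = 2a G_{x₁} + 2b G_{x₁x₂}, G_{x₂}' = 2d G_{x₂} + 2c G_{x₁x₂}, and G_{x₁x₂}' = (a+d) G_{x₁x₂} + b G_{x₂} + c G_{x₁}. -/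
open MeasureTheory

open Set Filter Topology

lemma aux_ibp (g w : ℝ × ℝ → ℝ) (hg : ContDiff ℝ 1 g) (hgs : HasCompactSupport g)
    (hw : ContDiff ℝ 1 w) (v : ℝ × ℝ) :
    Integrable (fun z => fderiv ℝ g z v * w z) ∧ Integrable (fun z => g z * fderiv ℝ w z v) ∧
    ∫ z, fderiv ℝ g z v * w z = - ∫ z, g z * fderiv ℝ w z v := by
  have cg : Continuous (fun z => fderiv ℝ g z v) :=
    (hg.continuous_fderiv (by simp)).clm_apply continuous_const
  have cw : Continuous (fun z => fderiv ℝ w z v) :=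
    (hw.continuous_fderiv (by simp)).clm_apply continuous_const
  have h1 : Integrable (fun z => fderiv ℝ g z v * w z) :=
    (cg.mul hw.continuous).integrable_of_hasCompactSupport
      ((hgs.fderiv_apply (𝕜 := ℝ) v).mul_right)
  have h2 : Integrable (fun z => g z * fderiv ℝ w z v) :=
    (hg.continuous.mul cw).integrable_of_hasCompactSupport hgs.mul_right
  have h3 : Integrable (fun z => g z * w z) :=
    (hg.continuous.mul hw.continuous).integrable_of_hasCompactSupport hgs.mul_right
  refine ⟨h1, h2, ?_⟩
  have := integral_mul_fderiv_eq_neg_fderiv_mul_of_integrable h1 h2 h3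
    (fun x _ => (hg.differentiable (by simp)) x) (fun x _ => (hw.differentiable (by simp)) x)
  rw [this, neg_neg]

lemma aux_J (J : Set ℝ) (hJ : (∃ T : ℝ, 0 < T ∧ J = Set.Ico 0 T) ∨ J = Set.Ici 0) :
    UniqueDiffOn ℝ J ∧ ∀ t ∈ J, ∃ r, t < r ∧ Set.Icc 0 r ⊆ J ∧ 0 ≤ t ∧ ∀ s ∈ J, 0 ≤ s := by
  rcases hJ with ⟨T, hT, rfl⟩ | rfl
  · refine ⟨uniqueDiffOn_Ico 0 T, fun t ht => ⟨(t + T) / 2, by linarith [ht.2], ?_, ht.1,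
      fun s hs => hs.1⟩⟩
    intro s hs
    exact ⟨hs.1, by linarith [ht.2, hs.2]⟩
  · exact ⟨uniqueDiffOn_Ici 0, fun t ht => ⟨t + 1, by linarith, fun s hs => hs.1, ht,
      fun s hs => hs⟩⟩

lemma aux_slice (J : Set ℝ) (ρ : ℝ → ℝ → ℝ → ℝ)
    (hreg : ContDiffOn ℝ 1 (fun p : ℝ × ℝ × ℝ => ρ p.1 p.2.1 p.2.2)
      (J ×ˢ (Set.univ : Set (ℝ × ℝ)))) (t : ℝ) (ht : t ∈ J) :
    ContDiff ℝ 1 (fun z : ℝ × ℝ => ρ t z.1 z.2) := by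
  rw [← contDiffOn_univ]
  have h : ContDiffOn ℝ 1 (fun z : ℝ × ℝ => (t, z)) univ := by fun_prop
  exact hreg.comp h (fun z _ => ⟨ht, mem_univ _⟩)

lemma aux_time (J : Set ℝ)
    (hJ : (∃ T : ℝ, 0 < T ∧ J = Set.Ico 0 T) ∨ J = Set.Ici 0)
    (ρ : ℝ → ℝ → ℝ → ℝ)
    (hreg : ContDiffOn ℝ 1 (fun p : ℝ × ℝ × ℝ => ρ p.1 p.2.1 p.2.2)
      (J ×ˢ (Set.univ : Set (ℝ × ℝ))))
    (K : Set (ℝ × ℝ)) (hK : IsCompact K)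
    (hsupp : ∀ t : ℝ, ∀ x y : ℝ, (x, y) ∉ K → ρ t x y = 0)
    (w : ℝ × ℝ → ℝ) (hw : ContDiff ℝ 1 w) (t : ℝ) (ht : t ∈ J) :
    HasDerivWithinAt (fun τ => ∫ z : ℝ × ℝ, ρ τ z.1 z.2 * w z)
      (∫ z : ℝ × ℝ, derivWithin (fun s => ρ s z.1 z.2) J t * w z) J t := by
  obtain ⟨hU, hJ2⟩ := aux_J J hJ
  obtain ⟨r, htr, hrJ, ht0, hJ0⟩ := hJ2 t ht
  set F : ℝ × ℝ × ℝ → ℝ := fun p => ρ p.1 p.2.1 p.2.2 with hF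
  set S : Set (ℝ × ℝ × ℝ) := J ×ˢ (Set.univ : Set (ℝ × ℝ)) with hS
  have hUS : UniqueDiffOn ℝ S := hU.prod uniqueDiffOn_univ
  have hcont := hreg.continuousOn_fderivWithin hUS le_rfl
  have hder : ∀ s ∈ J, ∀ z : ℝ × ℝ, HasDerivWithinAt (fun s => ρ s z.1 z.2)
      (fderivWithin ℝ F S (s, z) (1, 0)) J s := by
    intro s hs z
    have h1 : HasFDerivWithinAt F (fderivWithin ℝ F S (s, z)) S (s, z) :=
      ((hreg.differentiableOn (by simp)) (s, z) ⟨hs, mem_univ _⟩).hasFDerivWithinAt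
    have h2 : HasDerivWithinAt (fun s : ℝ => (s, z)) ((1 : ℝ), (0 : ℝ × ℝ)) J s :=
      (hasDerivWithinAt_id s J).prodMk (hasDerivWithinAt_const s J z)
    exact HasFDerivWithinAt.comp_hasDerivWithinAt (f := fun s : ℝ => (s, z)) s h1 h2
      (fun s hs => ⟨hs, mem_univ _⟩)
  have hcpt : IsCompact (Set.Icc 0 r ×ˢ K) := isCompact_Icc.prod hK
  obtain ⟨C, hC⟩ := hcpt.exists_bound_of_continuousOn
    (f := fun p : ℝ × ℝ × ℝ => fderivWithin ℝ F S p (1, 0))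
    ((hcont.mono (fun p hp => ⟨hrJ hp.1, mem_univ _⟩)).clm_apply continuousOn_const)
  have hint : ∀ s ∈ J, Integrable (fun z : ℝ × ℝ => ρ s z.1 z.2 * w z) := by
    intro s hs
    refine ((aux_slice J ρ hreg s hs).continuous.mul hw.continuous).integrable_of_hasCompactSupport
      (HasCompactSupport.mul_right (HasCompactSupport.intro hK (fun z hz => hsupp s z.1 z.2 hz)))
  rw [hasDerivWithinAt_iff_tendsto_slope]
  have hlim : Tendsto (fun s => ∫ z : ℝ × ℝ, slope (fun τ => ρ τ z.1 z.2) t s * w z)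
      (𝓝[J \ {t}] t) (𝓝 (∫ z : ℝ × ℝ, derivWithin (fun s => ρ s z.1 z.2) J t * w z)) := by
    refine tendsto_integral_filter_of_dominated_convergence
      (K.indicator (fun z => C * |w z|)) ?_ ?_ ?_ ?_
    · filter_upwards [self_mem_nhdsWithin] with s hs
      have c1 := (aux_slice J ρ hreg s hs.1).continuous
      have c2 := (aux_slice J ρ hreg t ht).continuous
      simp only [slope_def_field]
      exact (((c1.sub c2).div_const _).mul hw.continuous).aestronglyMeasurable
    · have hr : ∀ᶠ s in 𝓝[J \ {t}] t, s < r :=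
        nhdsWithin_le_nhds (Iio_mem_nhds htr)
      filter_upwards [self_mem_nhdsWithin, hr] with s hs hsr
      refine Eventually.of_forall fun z => ?_
      by_cases hz : z ∈ K
      · rw [indicator_of_mem hz, norm_mul, Real.norm_eq_abs (w z)]
        refine mul_le_mul_of_nonneg_right ?_ (abs_nonneg _)
        have hne : s - t ≠ 0 := sub_ne_zero.2 hs.2
        have := (convex_Icc (0 : ℝ) r).norm_image_sub_le_of_norm_hasDerivWithin_le
          (fun x hx => (hder x (hrJ hx) z).mono hrJ) (fun x hx => hC (x, z) ⟨hx, hz⟩)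
          (⟨ht0, htr.le⟩ : t ∈ Set.Icc 0 r) (⟨hJ0 s hs.1, hsr.le⟩ : s ∈ Set.Icc 0 r)
        rw [slope_def_field, norm_div, div_le_iff₀ (norm_pos_iff.2 hne)]
        exact this
      · rw [indicator_of_notMem hz]
        simp [slope_def_field, hsupp _ z.1 z.2 hz]
    · rw [integrable_indicator_iff hK.measurableSet]
      exact (continuous_const.mul hw.continuous.abs).continuousOn.integrableOn_compact hK
    · refine Eventually.of_forall fun z => ?_
      refine Tendsto.mul_const _ ?_
      rw [← hasDerivWithinAt_iff_tendsto_slope]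
      exact (hder t ht z).differentiableWithinAt.hasDerivWithinAt
  refine hlim.congr' ?_
  filter_upwards [self_mem_nhdsWithin] with s hs
  rw [slope_def_field, ← integral_sub (hint s hs.1) (hint t ht), ← integral_div]
  refine integral_congr_ae (Eventually.of_forall fun z => ?_)
  simp only [slope_def_field]
  ring

lemma aux_main (J : Set ℝ)
    (hJ : (∃ T : ℝ, 0 < T ∧ J = Set.Ico 0 T) ∨ J = Set.Ici 0)
    (a b c d : ℝ → ℝ)
    (ρ : ℝ → ℝ → ℝ → ℝ)
    (hreg : ContDiffOn ℝ 1 (fun p : ℝ × ℝ × ℝ => ρ p.1 p.2.1 p.2.2)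
      (J ×ˢ (Set.univ : Set (ℝ × ℝ))))
    (K : Set (ℝ × ℝ)) (hK : IsCompact K)
    (hsupp : ∀ t : ℝ, ∀ x y : ℝ, (x, y) ∉ K → ρ t x y = 0)
    (hcontinuity : ∀ t ∈ J, ∀ x y : ℝ,
      derivWithin (fun s => ρ s x y) J t +
        deriv (fun s => ρ t s y * (a t * s + b t * y)) x +
        deriv (fun s => ρ t x s * (c t * x + d t * s)) y = 0)
    (w : ℝ × ℝ → ℝ) (hw : ContDiff ℝ 1 w) (t : ℝ) (ht : t ∈ J) :
    HasDerivWithinAt (fun τ => ∫ z : ℝ × ℝ, ρ τ z.1 z.2 * w z)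
      (∫ z : ℝ × ℝ, ρ t z.1 z.2 * ((a t * z.1 + b t * z.2) * fderiv ℝ w z (1, 0) +
        (c t * z.1 + d t * z.2) * fderiv ℝ w z (0, 1))) J t := by
  convert aux_time J hJ ρ hreg K hK hsupp w hw t ht using 1
  have hsl := aux_slice J ρ hreg t ht
  have hcs : HasCompactSupport (fun z : ℝ × ℝ => ρ t z.1 z.2) :=
    HasCompactSupport.intro hK (fun z hz => hsupp t z.1 z.2 hz)
  set g1 : ℝ × ℝ → ℝ := fun z => ρ t z.1 z.2 * (a t * z.1 + b t * z.2) with hg1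
  set g2 : ℝ × ℝ → ℝ := fun z => ρ t z.1 z.2 * (c t * z.1 + d t * z.2) with hg2
  have c1 : ContDiff ℝ 1 g1 := hsl.mul (by fun_prop)
  have c2 : ContDiff ℝ 1 g2 := hsl.mul (by fun_prop)
  obtain ⟨i1, j1, e1⟩ := aux_ibp g1 w c1 hcs.mul_right hw (1, 0)
  obtain ⟨i2, j2, e2⟩ := aux_ibp g2 w c2 hcs.mul_right hw (0, 1)
  have key : ∀ z : ℝ × ℝ, derivWithin (fun s => ρ s z.1 z.2) J t * w z =
      -(fderiv ℝ g1 z (1, 0) * w z + fderiv ℝ g2 z (0, 1) * w z) := by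
    intro z
    have d1 : HasDerivAt (fun s => g1 (s, z.2)) (fderiv ℝ g1 z (1, 0)) z.1 :=
      HasFDerivAt.comp_hasDerivAt (f := fun s : ℝ => (s, z.2)) z.1
        ((c1.differentiable (by simp)) z).hasFDerivAt
        ((hasDerivAt_id z.1).prodMk (hasDerivAt_const z.1 z.2))
    have d2 : HasDerivAt (fun s => g2 (z.1, s)) (fderiv ℝ g2 z (0, 1)) z.2 :=
      HasFDerivAt.comp_hasDerivAt (f := fun s : ℝ => (z.1, s)) z.2
        ((c2.differentiable (by simp)) z).hasFDerivAt
        ((hasDerivAt_const z.2 z.1).prodMk (hasDerivAt_id z.2))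
    have h := hcontinuity t ht z.1 z.2
    have h1 := d1.deriv
    have h2 := d2.deriv
    simp only [hg1, hg2] at h1 h2 ⊢
    rw [h1, h2] at h
    linear_combination w z * h
  simp only [key]
  rw [integral_neg, integral_add i1 i2, e1, e2, neg_add, neg_neg, neg_neg, ← integral_add j1 j2]
  refine integral_congr_ae (Eventually.of_forall fun z => ?_)
  simp only [hg1, hg2]
  ring

/-- Let `J = [0,T)` with `0 < T ≤ ∞`, let `a,b,c,d` be continuous on `J`,
and let `ρ` be `C¹` on `J × ℝ²` with spatial support in a fixed compact set `K`,
satisfying the continuity equation `∂ₜρ + ∂₁(ρu₁) + ∂₂(ρu₂) = 0` for the linear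
velocity field `u₁ = a x₁ + b x₂`, `u₂ = c x₁ + d x₂`. Then the second moments
`G_{x₁} = (1/2)∫ρx₁²`, `G_{x₂} = (1/2)∫ρx₂²`, `G_{x₁x₂} = (1/2)∫ρx₁x₂` satisfy
`G_{x₁}' = 2aG_{x₁} + 2bG_{x₁x₂}`, `G_{x₂}' = 2dG_{x₂} + 2cG_{x₁x₂}`,
`G_{x₁x₂}' = (a+d)G_{x₁x₂} + bG_{x₂} + cG_{x₁}` on `J`. -/
theorem stmt_1 (J : Set ℝ)
    (hJ : (∃ T : ℝ, 0 < T ∧ J = Set.Ico 0 T) ∨ J = Set.Ici 0)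
    (a b c d : ℝ → ℝ)
    (ha : ContinuousOn a J) (hb : ContinuousOn b J)
    (hc : ContinuousOn c J) (hd : ContinuousOn d J)
    (ρ : ℝ → ℝ → ℝ → ℝ)
    (hreg : ContDiffOn ℝ 1 (fun p : ℝ × ℝ × ℝ => ρ p.1 p.2.1 p.2.2)
      (J ×ˢ (Set.univ : Set (ℝ × ℝ))))
    (K : Set (ℝ × ℝ)) (hK : IsCompact K)
    (hsupp : ∀ t : ℝ, ∀ x y : ℝ, (x, y) ∉ K → ρ t x y = 0)
    (hcontinuity : ∀ t ∈ J, ∀ x y : ℝ,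
      derivWithin (fun s => ρ s x y) J t +
        deriv (fun s => ρ t s y * (a t * s + b t * y)) x +
        deriv (fun s => ρ t x s * (c t * x + d t * s)) y = 0) :
    ∀ t ∈ J,
      HasDerivWithinAt (fun τ => (1 / 2) * ∫ z : ℝ × ℝ, ρ τ z.1 z.2 * z.1 ^ 2)
        (2 * a t * ((1 / 2) * ∫ z : ℝ × ℝ, ρ t z.1 z.2 * z.1 ^ 2) +
          2 * b t * ((1 / 2) * ∫ z : ℝ × ℝ, ρ t z.1 z.2 * (z.1 * z.2))) J t ∧
      HasDerivWithinAt (fun τ => (1 / 2) * ∫ z : ℝ × ℝ, ρ τ z.1 z.2 * z.2 ^ 2)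
        (2 * d t * ((1 / 2) * ∫ z : ℝ × ℝ, ρ t z.1 z.2 * z.2 ^ 2) +
          2 * c t * ((1 / 2) * ∫ z : ℝ × ℝ, ρ t z.1 z.2 * (z.1 * z.2))) J t ∧
      HasDerivWithinAt (fun τ => (1 / 2) * ∫ z : ℝ × ℝ, ρ τ z.1 z.2 * (z.1 * z.2))
        ((a t + d t) * ((1 / 2) * ∫ z : ℝ × ℝ, ρ t z.1 z.2 * (z.1 * z.2)) +
          b t * ((1 / 2) * ∫ z : ℝ × ℝ, ρ t z.1 z.2 * z.2 ^ 2) +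
          c t * ((1 / 2) * ∫ z : ℝ × ℝ, ρ t z.1 z.2 * z.1 ^ 2)) J t := by
  intro t ht
  have M := fun w hw => aux_main J hJ a b c d ρ hreg K hK hsupp hcontinuity w hw t ht
  have hint : ∀ w : ℝ × ℝ → ℝ, Continuous w →
      Integrable (fun z : ℝ × ℝ => ρ t z.1 z.2 * w z) := fun w hw =>
    ((aux_slice J ρ hreg t ht).continuous.mul hw).integrable_of_hasCompactSupport
      (HasCompactSupport.mul_right (HasCompactSupport.intro hK (fun z hz => hsupp t z.1 z.2 hz)))
  have I1 := hint (fun z => z.1 ^ 2) (by fun_prop)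
  have I2 := hint (fun z => z.2 ^ 2) (by fun_prop)
  have I3 := hint (fun z => z.1 * z.2) (by fun_prop)
  have f1 : ∀ z : ℝ × ℝ, HasFDerivAt (fun z : ℝ × ℝ => z.1) (ContinuousLinearMap.fst ℝ ℝ ℝ) z :=
    fun z => hasFDerivAt_fst
  have f2 : ∀ z : ℝ × ℝ, HasFDerivAt (fun z : ℝ × ℝ => z.2) (ContinuousLinearMap.snd ℝ ℝ ℝ) z :=
    fun z => hasFDerivAt_snd
  refine ⟨?_, ?_, ?_⟩
  · refine ((M (fun z => z.1 ^ 2) (by fun_prop)).const_mul (1 / 2)).congr_deriv ?_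
    have e : ∀ z : ℝ × ℝ, ρ t z.1 z.2 * ((a t * z.1 + b t * z.2) *
        fderiv ℝ (fun z : ℝ × ℝ => z.1 ^ 2) z (1, 0) +
        (c t * z.1 + d t * z.2) * fderiv ℝ (fun z : ℝ × ℝ => z.1 ^ 2) z (0, 1)) =
        2 * a t * (ρ t z.1 z.2 * z.1 ^ 2) + 2 * b t * (ρ t z.1 z.2 * (z.1 * z.2)) := by
      intro z
      rw [((f1 z).pow 2).fderiv]
      simp
      ring
    simp only [e]
    rw [integral_add (I1.const_mul _) (I3.const_mul _), integral_const_mul, integral_const_mul]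
    ring
  · refine ((M (fun z => z.2 ^ 2) (by fun_prop)).const_mul (1 / 2)).congr_deriv ?_
    have e : ∀ z : ℝ × ℝ, ρ t z.1 z.2 * ((a t * z.1 + b t * z.2) *
        fderiv ℝ (fun z : ℝ × ℝ => z.2 ^ 2) z (1, 0) +
        (c t * z.1 + d t * z.2) * fderiv ℝ (fun z : ℝ × ℝ => z.2 ^ 2) z (0, 1)) =
        2 * d t * (ρ t z.1 z.2 * z.2 ^ 2) + 2 * c t * (ρ t z.1 z.2 * (z.1 * z.2)) := by
      intro z
      rw [((f2 z).pow 2).fderiv]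
      simp
      ring
    simp only [e]
    rw [integral_add (I2.const_mul _) (I3.const_mul _), integral_const_mul, integral_const_mul]
    ring
  · refine ((M (fun z => z.1 * z.2) (by fun_prop)).const_mul (1 / 2)).congr_deriv ?_
    have e : ∀ z : ℝ × ℝ, ρ t z.1 z.2 * ((a t * z.1 + b t * z.2) *
        fderiv ℝ (fun z : ℝ × ℝ => z.1 * z.2) z (1, 0) +
        (c t * z.1 + d t * z.2) * fderiv ℝ (fun z : ℝ × ℝ => z.1 * z.2) z (0, 1)) =
        (a t + d t) * (ρ t z.1 z.2 * (z.1 * z.2)) + b t * (ρ t z.1 z.2 * z.2 ^ 2) +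
          c t * (ρ t z.1 z.2 * z.1 ^ 2) := by
      intro z
      have hm : fderiv ℝ (fun z : ℝ × ℝ => z.1 * z.2) z = _ := ((f1 z).mul (f2 z)).fderiv
      rw [hm]
      simp
      ring
    simp only [e]
    have I32 : Integrable (fun z : ℝ × ℝ => (a t + d t) * (ρ t z.1 z.2 * (z.1 * z.2)) +
        b t * (ρ t z.1 z.2 * z.2 ^ 2)) := (I3.const_mul _).add (I2.const_mul _)
    rw [integral_add I32 (I1.const_mul _),
      integral_add (I3.const_mul _) (I2.const_mul _), integral_const_mul, integral_const_mul,
      integral_const_mul]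
    ring
end

section
/- Let γ ≠ 0 and l be real parameters, and let c₀ be real. Suppose a, b, A solve the axisymmetric system (As0) on an interval J, with A(t) > 0 for all t ∈ J. Then the function t ↦ (b(t) − l/2) · A(t)^(−1/γ) is constant on J (equivalently, b(t) = l/2 + 𝒞 · A(t)^(1/γ) for a constant 𝒞). -/
/-- First integral of the axisymmetric system (As0):
if `A > 0` on `J` then `(b − l/2) · A^(−1/γ)` is constant along the solution,
i.e. `b = l/2 + 𝒞 A^(1/γ)` for some constant `𝒞`. -/
theorem stmt_4 (γ l c₀ : ℝ) (hγ : γ ≠ 0) (J : Set ℝ) (hJ : J.OrdConnected)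
    (a b A : ℝ → ℝ)
    (hsol : ∀ t ∈ J,
      HasDerivAt A (-2 * γ * a t * A t) t ∧
      HasDerivAt a (-(a t) ^ 2 + (b t) ^ 2 - l * b t - 2 * c₀ * A t) t ∧
      HasDerivAt b (-2 * a t * b t + l * a t) t)
    (hA : ∀ t ∈ J, 0 < A t) :
    ∀ s ∈ J, ∀ t ∈ J,
      (b s - l / 2) * (A s) ^ (-(1 / γ)) = (b t - l / 2) * (A t) ^ (-(1 / γ)) := by
  have key : ∀ t ∈ J, HasDerivWithinAt
      (fun t => (b t - l / 2) * (A t) ^ (-(1 / γ))) 0 J t := by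
    intro t ht
    obtain ⟨h1, -, h3⟩ := hsol t ht
    have hp := hA t ht
    have h4 := (h3.sub_const (l / 2)).mul (h1.rpow_const (p := -(1 / γ)) (Or.inl hp.ne'))
    have h5 := h4.hasDerivWithinAt (s := J)
    refine h5.congr_deriv ?_
    rw [Real.rpow_sub_one hp.ne']
    have := hp.ne'
    field_simp
    ring
  intro s hs t ht
  have h := hJ.convex.norm_image_sub_le_of_norm_hasDerivWithin_le (C := 0) key
    (fun x _ => by simp) ht hs
  rw [zero_mul, norm_le_zero_iff, sub_eq_zero] at h
  exact h
end

section
/- Let l be a nonzero real number and z₀ ∈ ℂ. Let J be a real interval containing 0 on which D(t) := (l + i z₀) e^(−i l t) − i z₀ is nonzero. Then the function z(t) := l z₀ / D(t) satisfies z(0) = z₀ and solves the complex Riccati equation z'(t) = −z(t)² + i l z(t) for all t ∈ J. -/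
/-- The explicit solution `z(t) = l z₀ / ((l + i z₀) e^(−i l t) − i z₀)`
of the complex Riccati equation `z' = −z² + i l z`. -/
noncomputable def riccatiSol (l : ℝ) (z₀ : ℂ) (t : ℝ) : ℂ :=
  (l : ℂ) * z₀ / (((l : ℂ) + Complex.I * z₀) * Complex.exp (-Complex.I * l * t) - Complex.I * z₀)

/-- If `l ≠ 0` and the denominator
`D(t) = (l + i z₀) e^(−i l t) − i z₀` does not vanish on an interval `J ∋ 0`,
then `z(t) = l z₀ / D(t)` satisfies `z(0) = z₀` and solves `z' = −z² + i l z` on `J`. -/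
theorem stmt_6 (l : ℝ) (hl : l ≠ 0) (z₀ : ℂ) (J : Set ℝ) (hJ : J.OrdConnected)
    (h0 : (0 : ℝ) ∈ J)
    (hD : ∀ t ∈ J,
      ((l : ℂ) + Complex.I * z₀) * Complex.exp (-Complex.I * l * t) - Complex.I * z₀ ≠ 0) :
    riccatiSol l z₀ 0 = z₀ ∧
    ∀ t ∈ J, HasDerivAt (riccatiSol l z₀)
      (-(riccatiSol l z₀ t) ^ 2 + Complex.I * l * riccatiSol l z₀ t) t := by
  have hlC : (l : ℂ) ≠ 0 := by exact_mod_cast hl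
  refine ⟨?_, fun t ht => ?_⟩
  · simp only [riccatiSol, Complex.ofReal_zero, mul_zero, Complex.exp_zero, mul_one,
      add_sub_cancel_right]
    exact mul_div_cancel_left₀ z₀ hlC
  · have hDt := hD t ht
    have h1 : HasDerivAt (fun s : ℝ => -Complex.I * l * (s : ℂ)) (-Complex.I * l * 1) t :=
      (Complex.ofRealCLM.hasDerivAt (x := t)).const_mul (-Complex.I * (l : ℂ))
    have h2 := ((h1.cexp.const_mul ((l : ℂ) + Complex.I * z₀)).sub_const (Complex.I * z₀))
    have h3 := (hasDerivAt_const t ((l : ℂ) * z₀)).fun_div h2 hDt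
    have h4 : HasDerivAt (riccatiSol l z₀) _ t := h3
    refine h4.congr_deriv ?_
    simp only [riccatiSol]
    generalize Complex.exp (-Complex.I * l * t) = E at *
    rw [div_pow, ← mul_div_assoc, ← sub_eq_zero]
    generalize hd : ((l : ℂ) + Complex.I * z₀) * E - Complex.I * z₀ = d at *
    have hE : ((l : ℂ) + Complex.I * z₀) * E = d + Complex.I * z₀ := by
      rw [← hd]; ring
    field_simp
    linear_combination (exp := 1) (l : ℂ) ^ 2 * z₀ * Complex.I * hE + (l : ℂ) ^ 2 * z₀ ^ 2 * Complex.I_sq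
end

section
/- Let l ≠ 0 be real and let a, b, c, d be real-valued differentiable functions on an interval J solving the system (Q): a' = −a² − bc + lc, b' = −(a+d)b + ld, c' = −(a+d)c − la, d' = −d² − bc − lb, and suppose a(t)d(t) − b(t)c(t) ≠ 0 on J. Then the function V := [a² + d² + (b − (ad − bc)/l)² + (c + (ad − bc)/l)²] / (ad − bc)² is constant along the solution, i.e., t ↦ V(a(t), b(t), c(t), d(t)) is constant on J. -/
/-- Along any solution of the system (Q)
`a' = −a² − bc + lc`, `b' = −(a+d)b + ld`, `c' = −(a+d)c − la`, `d' = −d² − bc − lb`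
with `ad − bc ≠ 0` on an interval `J`, the Lyapunov function
`V = [a² + d² + (b − (ad−bc)/l)² + (c + (ad−bc)/l)²] / (ad−bc)²` is constant. -/
theorem stmt_10 (l : ℝ) (hl : l ≠ 0) (J : Set ℝ) (hJ : J.OrdConnected)
    (a b c d : ℝ → ℝ)
    (hsol : ∀ t ∈ J,
      HasDerivAt a (-(a t) ^ 2 - b t * c t + l * c t) t ∧
      HasDerivAt b (-(a t + d t) * b t + l * d t) t ∧
      HasDerivAt c (-(a t + d t) * c t - l * a t) t ∧
      HasDerivAt d (-(d t) ^ 2 - b t * c t - l * b t) t)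
    (hdet : ∀ t ∈ J, a t * d t - b t * c t ≠ 0) :
    ∀ s ∈ J, ∀ t ∈ J,
      ((a s) ^ 2 + (d s) ^ 2 + (b s - (a s * d s - b s * c s) / l) ^ 2 +
          (c s + (a s * d s - b s * c s) / l) ^ 2) / (a s * d s - b s * c s) ^ 2 =
      ((a t) ^ 2 + (d t) ^ 2 + (b t - (a t * d t - b t * c t) / l) ^ 2 +
          (c t + (a t * d t - b t * c t) / l) ^ 2) / (a t * d t - b t * c t) ^ 2 := by
  intro s hs t ht
  have hconv : Convex ℝ J := hJ.convex
  have key : ∀ x ∈ J, HasDerivAt (fun t => ((a t) ^ 2 + (d t) ^ 2 +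
      (b t - (a t * d t - b t * c t) / l) ^ 2 +
      (c t + (a t * d t - b t * c t) / l) ^ 2) / (a t * d t - b t * c t) ^ 2) 0 x := by
    intro x hx
    obtain ⟨ha, hb, hc, hd⟩ := hsol x hx
    have hD0 := hdet x hx
    have hD : HasDerivAt (fun t => a t * d t - b t * c t)
        (-(a x + d x) * (a x * d x - b x * c x)) x := by
      refine ((ha.fun_mul hd).fun_sub (hb.fun_mul hc)).congr_deriv ?_
      ring
    have hN := (((ha.fun_pow 2).fun_add (hd.fun_pow 2)).fun_add
      ((hb.fun_sub (hD.div_const l)).fun_pow 2)).fun_add ((hc.fun_add (hD.div_const l)).fun_pow 2)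
    refine (hN.fun_div (hD.fun_pow 2) (pow_ne_zero 2 hD0)).congr_deriv ?_
    rw [div_eq_zero_iff]
    left
    simp only [Nat.add_one_sub_one, pow_one, Nat.cast_ofNat]
    field_simp
    ring
  have h := hconv.norm_image_sub_le_of_norm_hasDerivWithin_le (C := 0)
    (fun x hx => (key x hx).hasDerivWithinAt) (fun x _ => by simp) ht hs
  rw [zero_mul] at h
  exact sub_eq_zero.mp (norm_le_zero_iff.mp h)
end

section
/- Let l ≠ 0 be real and let a, b, c, d be real-valued differentiable functions on an interval J solving the system (Q): a' = −a² − bc + lc, b' = −(a+d)b + ld, c' = −(a+d)c − la, d' = −d² − bc − lb. Set δ := a·d − (b − l)(c + l) and suppose δ(t) ≠ 0 on J. Then the function V₁ := [a² + d² + (b − l + δ/l)² + (c + l − δ/l)²] / δ² is constant along the solution. -/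
/-- Along any solution of the system (Q)
`a' = −a² − bc + lc`, `b' = −(a+d)b + ld`, `c' = −(a+d)c − la`, `d' = −d² − bc − lb`
with `δ = ad − (b−l)(c+l) ≠ 0` on an interval `J`, the Lyapunov function
`V₁ = [a² + d² + (b − l + δ/l)² + (c + l − δ/l)²] / δ²` is constant. -/
theorem stmt_11 (l : ℝ) (hl : l ≠ 0) (J : Set ℝ) (hJ : J.OrdConnected)
    (a b c d : ℝ → ℝ)
    (hsol : ∀ t ∈ J,
      HasDerivAt a (-(a t) ^ 2 - b t * c t + l * c t) t ∧
      HasDerivAt b (-(a t + d t) * b t + l * d t) t ∧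
      HasDerivAt c (-(a t + d t) * c t - l * a t) t ∧
      HasDerivAt d (-(d t) ^ 2 - b t * c t - l * b t) t)
    (hδ : ∀ t ∈ J, a t * d t - (b t - l) * (c t + l) ≠ 0) :
    ∀ s ∈ J, ∀ t ∈ J,
      ((a s) ^ 2 + (d s) ^ 2 +
          (b s - l + (a s * d s - (b s - l) * (c s + l)) / l) ^ 2 +
          (c s + l - (a s * d s - (b s - l) * (c s + l)) / l) ^ 2) /
        (a s * d s - (b s - l) * (c s + l)) ^ 2 =
      ((a t) ^ 2 + (d t) ^ 2 +
          (b t - l + (a t * d t - (b t - l) * (c t + l)) / l) ^ 2 +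
          (c t + l - (a t * d t - (b t - l) * (c t + l)) / l) ^ 2) /
        (a t * d t - (b t - l) * (c t + l)) ^ 2 := by
  intro s hs t ht
  let D : ℝ → ℝ := fun x => a x * d x - (b x - l) * (c x + l)
  let F : ℝ → ℝ := fun x => ((a x) ^ 2 + (d x) ^ 2 + (b x - l + D x / l) ^ 2 +
    (c x + l - D x / l) ^ 2) / (D x) ^ 2
  have hF : ∀ x ∈ J, HasDerivWithinAt F ((fun _ => (0 : ℝ)) x) J x := by
    intro x hx
    obtain ⟨ha, hb, hc, hd⟩ := hsol x hx
    have hx0 : D x ≠ 0 := hδ x hx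
    have hD : HasDerivAt D (-(a x + d x) * D x) x := by
      refine ((ha.mul hd).sub ((hb.sub_const l).mul (hc.add_const l))).congr_deriv ?_
      simp only [D]
      ring
    have hp : HasDerivAt (fun x => a x / D x) (l * ((b x - l) / D x + 1 / l)) x := by
      refine (ha.div hD hx0).congr_deriv ?_
      field_simp
      simp only [D]
      ring
    have hq : HasDerivAt (fun x => d x / D x) (-l * ((c x + l) / D x - 1 / l)) x := by
      refine (hd.div hD hx0).congr_deriv ?_
      field_simp
      simp only [D]
      ring
    have hr : HasDerivAt (fun x => (b x - l) / D x + 1 / l) (-l * (a x / D x)) x := by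
      refine (((hb.sub_const l).div hD hx0).add_const (1 / l)).congr_deriv ?_
      field_simp
      ring
    have hw : HasDerivAt (fun x => (c x + l) / D x - 1 / l) (l * (d x / D x)) x := by
      refine (((hc.add_const l).div hD hx0).sub_const (1 / l)).congr_deriv ?_
      field_simp
      ring
    have hN := (((hp.pow 2).add (hq.pow 2)).add (hr.pow 2)).add (hw.pow 2)
    have hN0 := hN.congr_deriv (g' := 0) (by push_cast; ring)
    refine hN0.hasDerivWithinAt.congr_of_mem ?_ hx
    intro y hy
    have hy0 : D y ≠ 0 := hδ y hy
    simp only [F, Pi.add_apply, Pi.pow_apply]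
    generalize D y = z at *
    field_simp
  have h := hJ.convex.norm_image_sub_le_of_norm_hasDerivWithin_le (C := 0) hF
    (fun x _ => by simp) ht hs
  have h2 : F s - F t = 0 := by
    rw [← norm_le_zero_iff]
    simpa using h
  exact sub_eq_zero.mp h2
end

section
/- Let l ≠ 0 be real. Then each of the two equilibrium points x* = (0, l, −l, 0) and x* = (0, 0, 0, 0) of the system (Q) is stable in the Lyapunov sense: for every ε > 0 there exists δ > 0 such that every solution x = (a,b,c,d) of (Q) defined on an interval [0,T) (0 < T ≤ ∞) with |x(0) − x*| < δ satisfies |x(t) − x*| < ε for all t ∈ [0,T). -/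
/-- A quadruple of functions solves the system (Q)
`a' = −a² − bc + lc`, `b' = −(a+d)b + ld`, `c' = −(a+d)c − la`, `d' = −d² − bc − lb`
on the set `J` (one-sided derivatives at boundary points of `J`). -/
def SolvesQ (l : ℝ) (a b c d : ℝ → ℝ) (J : Set ℝ) : Prop :=
  ∀ t ∈ J,
    HasDerivWithinAt a (-(a t) ^ 2 - b t * c t + l * c t) J t ∧
    HasDerivWithinAt b (-(a t + d t) * b t + l * d t) J t ∧
    HasDerivWithinAt c (-(a t + d t) * c t - l * a t) J t ∧
    HasDerivWithinAt d (-(d t) ^ 2 - b t * c t - l * b t) J t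

set_option maxHeartbeats 2000000 in
open Set in
/-- Linearization of the Riccati equation: `Q(t) (u + S(t) Q(0) u) = E(t) Q(0) u`. -/
lemma lin_identity (l : ℝ) (hl : l ≠ 0) (J : Set ℝ)
    (hJ : (∃ T : ℝ, 0 < T ∧ J = Set.Ico 0 T) ∨ J = Set.Ici 0)
    (a b c d : ℝ → ℝ) (h : SolvesQ l a b c d J) (u1 u2 v1 v2 : ℝ)
    (hv1 : v1 = a 0 * u1 + b 0 * u2) (hv2 : v2 = c 0 * u1 + d 0 * u2)
    (t : ℝ) (ht : t ∈ J) :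
    a t * (u1 + (Real.sin (l * t) / l * v1 + (1 - Real.cos (l * t)) / l * v2))
      + b t * (u2 + (-((1 - Real.cos (l * t)) / l) * v1 + Real.sin (l * t) / l * v2))
      = Real.cos (l * t) * v1 + Real.sin (l * t) * v2 ∧
    c t * (u1 + (Real.sin (l * t) / l * v1 + (1 - Real.cos (l * t)) / l * v2))
      + d t * (u2 + (-((1 - Real.cos (l * t)) / l) * v1 + Real.sin (l * t) / l * v2))
      = -Real.sin (l * t) * v1 + Real.cos (l * t) * v2 := by
  have ht0 : 0 ≤ t := by
    rcases hJ with ⟨T, hT, rfl⟩ | rfl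
    · exact ht.1
    · exact ht
  have hsub : Icc 0 t ⊆ J := by
    rcases hJ with ⟨T, hT, rfl⟩ | rfl
    · exact fun x hx => ⟨hx.1, hx.2.trans_lt ht.2⟩
    · exact fun x hx => hx.1
  have hnb : ∀ x ∈ Ico 0 t, J ∈ nhdsWithin x (Ici x) := by
    intro x hx
    refine Filter.mem_of_superset (Icc_mem_nhdsGE hx.2) ?_
    exact fun y hy => hsub ⟨hx.1.trans hy.1, hy.2⟩
  have hs : ∀ x : ℝ, HasDerivAt (fun x => Real.sin (l * x)) (Real.cos (l * x) * l) x := by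
    intro x
    have := ((hasDerivAt_id x).const_mul l).sin
    simpa using this
  have hc : ∀ x : ℝ, HasDerivAt (fun x => Real.cos (l * x)) (-Real.sin (l * x) * l) x := by
    intro x
    have := ((hasDerivAt_id x).const_mul l).cos
    simpa using this
  set m1 : ℝ → ℝ := fun t => u1 + (Real.sin (l * t) / l * v1 + (1 - Real.cos (l * t)) / l * v2)
    with hm1
  set m2 : ℝ → ℝ := fun t => u2 + (-((1 - Real.cos (l * t)) / l) * v1 + Real.sin (l * t) / l * v2)
    with hm2
  set p1 : ℝ → ℝ := fun t => Real.cos (l * t) * v1 + Real.sin (l * t) * v2 with hp1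
  set p2 : ℝ → ℝ := fun t => -Real.sin (l * t) * v1 + Real.cos (l * t) * v2 with hp2
  have dm1 : ∀ x, HasDerivAt m1 (p1 x) x := by
    intro x
    have := ((((hs x).div_const l).mul_const v1).add
      ((((hc x).const_sub 1).div_const l).mul_const v2)).const_add u1
    refine this.congr_deriv ?_
    simp only [hp1]; field_simp
  have dm2 : ∀ x, HasDerivAt m2 (p2 x) x := by
    intro x
    have := ((((((hc x).const_sub 1).div_const l).neg).mul_const v1).add
      (((hs x).div_const l).mul_const v2)).const_add u2
    refine this.congr_deriv ?_
    simp only [hp2]; field_simp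
  have dp1 : ∀ x, HasDerivAt p1 (l * p2 x) x := by
    intro x
    have := ((hc x).mul_const v1).add ((hs x).mul_const v2)
    refine this.congr_deriv ?_
    simp only [hp2]; ring
  have dp2 : ∀ x, HasDerivAt p2 (-l * p1 x) x := by
    intro x
    have := ((hs x).neg.mul_const v1).add ((hc x).mul_const v2)
    refine this.congr_deriv ?_
    simp only [hp1]; ring
  set w1 : ℝ → ℝ := fun x => a x * m1 x + b x * m2 x - p1 x with hw1
  set w2 : ℝ → ℝ := fun x => c x * m1 x + d x * m2 x - p2 x with hw2
  have dw1 : ∀ x ∈ J, HasDerivWithinAt w1 (-(a x * w1 x + (b x - l) * w2 x)) J x := by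
    intro x hx
    obtain ⟨ha, hb, hc', hd⟩ := h x hx
    have := ((ha.mul (dm1 x).hasDerivWithinAt).add (hb.mul (dm2 x).hasDerivWithinAt)).sub
      (dp1 x).hasDerivWithinAt
    refine this.congr_deriv ?_
    simp only [hw1, hw2]; ring
  have dw2 : ∀ x ∈ J, HasDerivWithinAt w2 (-((c x + l) * w1 x + d x * w2 x)) J x := by
    intro x hx
    obtain ⟨ha, hb, hc', hd⟩ := h x hx
    have := ((hc'.mul (dm1 x).hasDerivWithinAt).add (hd.mul (dm2 x).hasDerivWithinAt)).sub
      (dp2 x).hasDerivWithinAt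
    refine this.congr_deriv ?_
    simp only [hw1, hw2]; ring
  have ca : ContinuousOn a (Icc 0 t) := fun x hx =>
    ((h x (hsub hx)).1.continuousWithinAt).mono hsub
  have cb : ContinuousOn b (Icc 0 t) := fun x hx =>
    ((h x (hsub hx)).2.1.continuousWithinAt).mono hsub
  have cc : ContinuousOn c (Icc 0 t) := fun x hx =>
    ((h x (hsub hx)).2.2.1.continuousWithinAt).mono hsub
  have cd : ContinuousOn d (Icc 0 t) := fun x hx =>
    ((h x (hsub hx)).2.2.2.continuousWithinAt).mono hsub
  have i1 : w1 0 = 0 := by simp [hw1, hm1, hm2, hp1, hv1]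
  have i2 : w2 0 = 0 := by simp [hw2, hm1, hm2, hp2, hv2]
  suffices hfin : w1 t = 0 ∧ w2 t = 0 from
    ⟨sub_eq_zero.mp hfin.1, sub_eq_zero.mp hfin.2⟩
  clear_value w1 w2
  obtain ⟨A, hA⟩ := isCompact_Icc.exists_bound_of_continuousOn ca
  obtain ⟨B, hB⟩ := isCompact_Icc.exists_bound_of_continuousOn cb
  obtain ⟨C, hC⟩ := isCompact_Icc.exists_bound_of_continuousOn cc
  obtain ⟨D, hD⟩ := isCompact_Icc.exists_bound_of_continuousOn cd
  have dV : ∀ x ∈ J, HasDerivWithinAt (fun x => w1 x ^ 2 + w2 x ^ 2)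
      (-2 * (a x * w1 x ^ 2 + (b x + c x) * (w1 x * w2 x) + d x * w2 x ^ 2)) J x := by
    intro x hx
    refine (((dw1 x hx).pow 2).add ((dw2 x hx).pow 2)).congr_deriv ?_
    push_cast; ring
  have key := norm_le_gronwallBound_of_norm_deriv_right_le (f := fun x => w1 x ^ 2 + w2 x ^ 2)
    (f' := fun x => -2 * (a x * w1 x ^ 2 + (b x + c x) * (w1 x * w2 x) + d x * w2 x ^ 2))
    (δ := 0) (K := 2 * (A + B + C + D)) (ε := 0) (a := 0) (b := t)
    (fun x hx => ((dV x (hsub hx)).continuousWithinAt).mono hsub)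
    (fun x hx => (dV x (hsub ⟨hx.1, hx.2.le⟩)).mono_of_mem_nhdsWithin (hnb x hx))
    (by simp [i1, i2])
    (by
      intro x hx
      have hx' : x ∈ Icc 0 t := ⟨hx.1, hx.2.le⟩
      have hA := hA x hx'
      have hB := hB x hx'
      have hC := hC x hx'
      have hD := hD x hx'
      simp only [Real.norm_eq_abs] at hA hB hC hD ⊢
      have e1 : 0 ≤ w1 x ^ 2 := sq_nonneg _
      have e2 : 0 ≤ w2 x ^ 2 := sq_nonneg _
      have e3 : |w1 x * w2 x| ≤ w1 x ^ 2 + w2 x ^ 2 := by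
        rw [abs_le]; constructor <;> nlinarith [sq_nonneg (w1 x + w2 x), sq_nonneg (w1 x - w2 x)]
      rw [abs_of_nonneg (add_nonneg e1 e2), abs_mul, add_zero, mul_assoc]
      have e4 : |(-2:ℝ)| = 2 := by norm_num
      rw [e4]
      refine mul_le_mul_of_nonneg_left ?_ (by norm_num)
      have f1 : |a x * w1 x ^ 2| ≤ A * (w1 x ^ 2 + w2 x ^ 2) := by
        rw [abs_mul, abs_of_nonneg e1]
        exact mul_le_mul hA (by linarith) e1 ((abs_nonneg _).trans hA)
      have f2 : |d x * w2 x ^ 2| ≤ D * (w1 x ^ 2 + w2 x ^ 2) := by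
        rw [abs_mul, abs_of_nonneg e2]
        exact mul_le_mul hD (by linarith) e2 ((abs_nonneg _).trans hD)
      have f3 : |(b x + c x) * (w1 x * w2 x)| ≤ (B + C) * (w1 x ^ 2 + w2 x ^ 2) := by
        rw [abs_mul]
        have : |b x + c x| ≤ B + C := (abs_add_le _ _).trans (add_le_add hB hC)
        exact mul_le_mul this e3 (abs_nonneg _) ((abs_nonneg _).trans this)
      have g1 := abs_add_le (a x * w1 x ^ 2 + (b x + c x) * (w1 x * w2 x)) (d x * w2 x ^ 2)
      have g2 := abs_add_le (a x * w1 x ^ 2) ((b x + c x) * (w1 x * w2 x))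
      linarith)
    t ⟨ht0, le_rfl⟩
  rw [gronwallBound_ε0, zero_mul] at key
  have hz : w1 t ^ 2 + w2 t ^ 2 = 0 := norm_le_zero_iff.mp key
  have z1 : w1 t = 0 := by nlinarith [sq_nonneg (w1 t), sq_nonneg (w2 t)]
  have z2 : w2 t = 0 := by nlinarith [sq_nonneg (w1 t), sq_nonneg (w2 t)]
  exact ⟨z1, z2⟩

lemma row_bound (x y P R e1 e2 e3 e4 δ : ℝ) (h1 : |e1| ≤ 1 / 8) (h2 : |e2| ≤ 1 / 8)
    (h3 : |e3| ≤ 1 / 8) (h4 : |e4| ≤ 1 / 8) (hP : |P| ≤ 2 * δ) (hR : |R| ≤ 2 * δ)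
    (hx : x * (1 + e1) + y * (0 + e2) = P) (hy : x * (0 + e3) + y * (1 + e4) = R) :
    |x| ≤ 6 * δ ∧ |y| ≤ 6 * δ := by
  have k : ∀ z e : ℝ, |e| ≤ 1 / 8 → |z * e| ≤ |z| * (1 / 8) := fun z e he => by
    rw [abs_mul]; exact mul_le_mul_of_nonneg_left he (abs_nonneg _)
  have k1 := k x e1 h1
  have k2 := k y e2 h2
  have k3 := k x e3 h3
  have k4 := k y e4 h4
  have hx' : x = P - x * e1 - y * e2 := by linarith
  have hy' : y = R - x * e3 - y * e4 := by linarith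
  have bx : |x| ≤ |P| + |x * e1| + |y * e2| := by
    have := abs_sub (P - x * e1) (y * e2)
    have := abs_sub P (x * e1)
    rw [← hx'] at *
    linarith
  have bdy : |y| ≤ |R| + |x * e3| + |y * e4| := by
    have := abs_sub (R - x * e3) (y * e4)
    have := abs_sub R (x * e3)
    rw [← hy'] at *
    linarith
  have := abs_nonneg x
  have := abs_nonneg y
  constructor <;> linarith

/-- Stability of the zero equilibrium, with an explicit `δ`. -/
lemma zero_stable (l : ℝ) (hl : l ≠ 0) (ε : ℝ) (δ : ℝ) (hδ : 0 < δ)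
    (hδε : 12 * δ < ε) (hδl : 24 * δ ≤ |l|) (J : Set ℝ)
    (hJ : (∃ T : ℝ, 0 < T ∧ J = Set.Ico 0 T) ∨ J = Set.Ici 0)
    (a b c d : ℝ → ℝ) (h : SolvesQ l a b c d J)
    (h0 : Real.sqrt (a 0 ^ 2 + b 0 ^ 2 + c 0 ^ 2 + d 0 ^ 2) < δ) (t : ℝ) (ht : t ∈ J) :
    Real.sqrt (a t ^ 2 + b t ^ 2 + c t ^ 2 + d t ^ 2) < ε := by
  rw [Real.sqrt_lt' hδ] at h0
  have ha : |a 0| ≤ δ := abs_le_of_sq_le_sq (by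
    linarith [sq_nonneg (b 0), sq_nonneg (c 0), sq_nonneg (d 0)]) hδ.le
  have hb : |b 0| ≤ δ := abs_le_of_sq_le_sq (by
    linarith [sq_nonneg (a 0), sq_nonneg (c 0), sq_nonneg (d 0)]) hδ.le
  have hc : |c 0| ≤ δ := abs_le_of_sq_le_sq (by
    linarith [sq_nonneg (b 0), sq_nonneg (a 0), sq_nonneg (d 0)]) hδ.le
  have hd : |d 0| ≤ δ := abs_le_of_sq_le_sq (by
    linarith [sq_nonneg (b 0), sq_nonneg (c 0), sq_nonneg (a 0)]) hδ.le
  obtain ⟨q1, q3⟩ := lin_identity l hl J hJ a b c d h 1 0 (a 0) (c 0) (by ring) (by ring) t ht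
  obtain ⟨q2, q4⟩ := lin_identity l hl J hJ a b c d h 0 1 (b 0) (d 0) (by ring) (by ring) t ht
  have hs : |Real.sin (l * t)| ≤ 1 := Real.abs_sin_le_one _
  have hco : |Real.cos (l * t)| ≤ 1 := Real.abs_cos_le_one _
  have hk : |1 - Real.cos (l * t)| ≤ 2 := by
    rw [abs_le]; constructor <;> linarith [Real.cos_le_one (l * t), Real.neg_one_le_cos (l * t)]
  have hl0 : 0 < |l| := abs_pos.mpr hl
  have hS : ∀ p, |p| ≤ δ → |Real.sin (l * t) / l * p| ≤ 1 / 24 := by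
    intro p hp
    rw [div_mul_eq_mul_div, abs_div, abs_mul, div_le_iff₀ hl0]
    have := mul_le_mul hs hp (abs_nonneg _) zero_le_one
    linarith
  have hK : ∀ p, |p| ≤ δ → |(1 - Real.cos (l * t)) / l * p| ≤ 2 / 24 := by
    intro p hp
    rw [div_mul_eq_mul_div, abs_div, abs_mul, div_le_iff₀ hl0]
    have := mul_le_mul hk hp (abs_nonneg _) zero_le_two
    linarith
  have hE : ∀ p q r : ℝ, |p| ≤ δ → |r| ≤ 1 → |r * p| ≤ δ := by
    intro p q r hp hr
    rw [abs_mul]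
    have := mul_le_mul hr hp (abs_nonneg _) zero_le_one
    linarith
  have m1 : ∀ p q, |p| ≤ δ → |q| ≤ δ →
      |Real.sin (l * t) / l * p + (1 - Real.cos (l * t)) / l * q| ≤ 1 / 8 := by
    intro p q hp hq
    have := abs_add_le (Real.sin (l * t) / l * p) ((1 - Real.cos (l * t)) / l * q)
    linarith [hS p hp, hK q hq]
  have m2 : ∀ p q, |p| ≤ δ → |q| ≤ δ →
      |-((1 - Real.cos (l * t)) / l) * p + Real.sin (l * t) / l * q| ≤ 1 / 8 := by
    intro p q hp hq
    have := abs_add_le (-((1 - Real.cos (l * t)) / l) * p) (Real.sin (l * t) / l * q)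
    have h3 : |-((1 - Real.cos (l * t)) / l) * p| = |(1 - Real.cos (l * t)) / l * p| := by
      rw [neg_mul, abs_neg]
    linarith [hS q hq, hK p hp]
  have n1 : ∀ p q, |p| ≤ δ → |q| ≤ δ →
      |Real.cos (l * t) * p + Real.sin (l * t) * q| ≤ 2 * δ := by
    intro p q hp hq
    have := abs_add_le (Real.cos (l * t) * p) (Real.sin (l * t) * q)
    linarith [hE p 0 _ hp hco, hE q 0 _ hq hs]
  have n2 : ∀ p q, |p| ≤ δ → |q| ≤ δ →
      |-Real.sin (l * t) * p + Real.cos (l * t) * q| ≤ 2 * δ := by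
    intro p q hp hq
    have := abs_add_le (-Real.sin (l * t) * p) (Real.cos (l * t) * q)
    linarith [hE p 0 (-Real.sin (l * t)) hp (by rwa [abs_neg]), hE q 0 _ hq hco]
  obtain ⟨ra, rb⟩ := row_bound _ _ _ _ _ _ _ _ δ (m1 _ _ ha hc) (m2 _ _ ha hc) (m1 _ _ hb hd)
    (m2 _ _ hb hd) (n1 _ _ ha hc) (n1 _ _ hb hd) q1 q2
  obtain ⟨rc, rd⟩ := row_bound _ _ _ _ _ _ _ _ δ (m1 _ _ ha hc) (m2 _ _ ha hc) (m1 _ _ hb hd)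
    (m2 _ _ hb hd) (n2 _ _ ha hc) (n2 _ _ hb hd) q3 q4
  refine lt_of_le_of_lt ?_ hδε
  apply Real.sqrt_le_iff.mpr
  refine ⟨by linarith, ?_⟩
  have sq : ∀ z : ℝ, |z| ≤ 6 * δ → z ^ 2 ≤ (6 * δ) ^ 2 := fun z hz => sq_le_sq' (by
    linarith [(abs_le.mp hz).1]) (abs_le.mp hz).2
  nlinarith [sq _ ra, sq _ rb, sq _ rc, sq _ rd]

/-- For `l ≠ 0`, each of the two equilibria `(0, l, −l, 0)` and
`(0, 0, 0, 0)` of the system (Q) is Lyapunov stable: for every `ε > 0` there is a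
`δ > 0` such that every solution on `[0,T)` (with `0 < T ≤ ∞`) starting within
Euclidean distance `δ` of the equilibrium stays within distance `ε` for all times. -/
theorem stmt_12 (l : ℝ) (hl : l ≠ 0) (e : ℝ × ℝ × ℝ × ℝ)
    (he : e = (0, l, -l, 0) ∨ e = (0, 0, 0, 0)) :
    ∀ ε > 0, ∃ δ > 0, ∀ J : Set ℝ,
      ((∃ T : ℝ, 0 < T ∧ J = Set.Ico 0 T) ∨ J = Set.Ici 0) →
      ∀ a b c d : ℝ → ℝ, SolvesQ l a b c d J →
        Real.sqrt ((a 0 - e.1) ^ 2 + (b 0 - e.2.1) ^ 2 + (c 0 - e.2.2.1) ^ 2 +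
          (d 0 - e.2.2.2) ^ 2) < δ →
        ∀ t ∈ J,
          Real.sqrt ((a t - e.1) ^ 2 + (b t - e.2.1) ^ 2 + (c t - e.2.2.1) ^ 2 +
            (d t - e.2.2.2) ^ 2) < ε := by
  intro ε hε
  have hl0 : 0 < |l| := abs_pos.mpr hl
  have hδ : 0 < min (ε / 13) (|l| / 24) := lt_min (by positivity) (by positivity)
  have h1 := min_le_left (ε / 13) (|l| / 24)
  have h2 := min_le_right (ε / 13) (|l| / 24)
  refine ⟨min (ε / 13) (|l| / 24), hδ, ?_⟩
  intro J hJ a b c d h h0 t ht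
  rcases he with rfl | rfl
  ·
    have h' : SolvesQ l a (fun x => c x + l) (fun x => b x - l) d J := by
      intro x hx
      obtain ⟨ha, hb, hc, hd⟩ := h x hx
      refine ⟨ha.congr_deriv ?_, (hc.add_const l).congr_deriv ?_,
        (hb.sub_const l).congr_deriv ?_, hd.congr_deriv ?_⟩ <;> ring
    have := zero_stable l hl ε _ hδ (by linarith) (by linarith) J hJ _ _ _ _ h'
      (by refine lt_of_eq_of_lt ?_ h0; congr 1; ring) t ht
    refine lt_of_eq_of_lt ?_ this
    congr 1; ring
  · have := zero_stable l hl ε _ hδ (by linarith) (by linarith) J hJ _ _ _ _ h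
      (by simpa using h0) t ht
    simpa using this
end

section
/- Let γ ∈ (1,2), l > 0, c₀ > 0 be real parameters and let b* be a real number with b* < (1 − √2)·l/2 or b* > (1 + √2)·l/2. Set A* = b*(b* − l)/(2c₀) and let x* = (0, b*, −b*, 0, A*, 0, A*) be the corresponding equilibrium of the system (S). Then x* is unstable in the Lyapunov sense: there exists ε > 0 such that for every δ > 0 there exist T > 0 and a solution x = (a,b,c,d,A,B,C) of (S) on [0,T] with |x(0) − x*| < δ and |x(T) − x*| ≥ ε. -/
/-- A 7-tuple of functions solves the full system (S) on the set `J`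
(one-sided derivatives at boundary points of `J`). -/
def SolvesS (γ l c₀ : ℝ) (a b c d A B C : ℝ → ℝ) (J : Set ℝ) : Prop :=
  ∀ t ∈ J,
    HasDerivWithinAt a (-(a t) ^ 2 - b t * c t + l * c t - 2 * c₀ * A t) J t ∧
    HasDerivWithinAt b (-(a t + d t) * b t + l * d t - c₀ * B t) J t ∧
    HasDerivWithinAt c (-(a t + d t) * c t - l * a t - c₀ * B t) J t ∧
    HasDerivWithinAt d (-(d t) ^ 2 - b t * c t - l * b t - 2 * c₀ * C t) J t ∧
    HasDerivWithinAt A (-2 * a t * A t - c t * B t - (γ - 1) * (a t + d t) * A t) J t ∧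
    HasDerivWithinAt B (-2 * b t * A t - 2 * c t * C t - γ * (a t + d t) * B t) J t ∧
    HasDerivWithinAt C (-2 * d t * C t - b t * B t - (γ - 1) * (a t + d t) * C t) J t

open Set Metric in
theorem chetaev {E : Type*} [NormedAddCommGroup E] [InnerProductSpace ℝ E]
    [FiniteDimensional ℝ E] (f : E → E) (hf : ContDiff ℝ 1 f) (V W : E → ℝ) (hV : Continuous V)
    (hVW : ∀ (x : ℝ → E) (t : ℝ) (J : Set ℝ), HasDerivWithinAt x (f (x t)) J t →
      HasDerivWithinAt (fun s => V (x s)) (W (x t)) J t)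
    (κ ε : ℝ) (hκ : 0 < κ) (hε : 0 < ε) (hW : ∀ x, ‖x‖ ≤ ε → κ * V x ≤ W x)
    (x₀ : E) (hx₀ : ‖x₀‖ < ε) (hVx : 0 < V x₀) :
    ∃ T > 0, ∃ x : ℝ → E, x 0 = x₀ ∧ ε ≤ ‖x T‖ ∧
      ∀ t ∈ Icc (0 : ℝ) T, HasDerivWithinAt x (f (x t)) (Icc 0 T) t := by
  let φ : ContDiffBump (0 : E) := ⟨ε, ε + 1, hε, by linarith⟩
  let g : E → E := fun x => φ x • f x
  have hgf : ∀ x, ‖x‖ ≤ ε → g x = f x := by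
    intro x hx
    have : φ x = 1 := φ.one_of_mem_closedBall (by simpa [φ] using hx)
    simp [g, this]
  have hgc : ContDiff ℝ 1 g := φ.contDiff.smul hf
  have hgs : HasCompactSupport g := φ.hasCompactSupport.smul_right
  obtain ⟨K, hK⟩ := hgc.lipschitzWith_of_hasCompactSupport hgs (by simp)
  obtain ⟨L, hL⟩ := hgs.exists_bound_of_continuous hgc.continuous
  have hL0 : 0 ≤ L := (norm_nonneg _).trans (hL 0)
  obtain ⟨M, hM⟩ := (isCompact_closedBall (0 : E) ε).exists_bound_of_continuousOn hV.continuousOn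
  obtain ⟨T, hT0, hT⟩ : ∃ T > 0, M < V x₀ * Real.exp (κ * T) := by
    have h1 : Filter.Tendsto (fun T => V x₀ * Real.exp (κ * T)) Filter.atTop Filter.atTop :=
      (Real.tendsto_exp_atTop.comp (Filter.tendsto_id.const_mul_atTop hκ)).const_mul_atTop hVx
    obtain ⟨T, h, h'⟩ := ((Filter.eventually_gt_atTop 0).and (h1.eventually_gt_atTop M)).exists
    exact ⟨T, h, h'⟩
  have hPL : IsPicardLindelof (fun _ => g) (tmin := 0) (tmax := T) ⟨0, by simp [hT0.le]⟩ x₀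
      ⟨L * T, by positivity⟩ 0 ⟨L, hL0⟩ K := by
    refine ⟨fun t _ => hK.lipschitzOnWith, fun x _ => continuousOn_const, fun t _ x _ => hL x, ?_⟩
    simp only [sub_self, sub_zero, NNReal.coe_zero, max_eq_left hT0.le]
    exact le_rfl
  obtain ⟨x, hx0, hx⟩ := hPL.exists_eq_forall_mem_Icc_hasDerivWithinAt₀
  simp only at hx0
  have hxc : ContinuousOn x (Icc 0 T) := fun t ht => (hx t ht).continuousWithinAt
  have hex : ∃ t ∈ Icc 0 T, ε ≤ ‖x t‖ := by
    by_contra! hcon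
    have hder : ∀ t ∈ Icc 0 T, HasDerivWithinAt (fun s => V (x s) * Real.exp (-κ * s))
        (W (x t) * Real.exp (-κ * t) + V (x t) * (Real.exp (-κ * t) * (-κ))) (Icc 0 T) t := by
      intro t ht
      have h1 := hVW x t _ (by simpa [hgf _ (hcon t ht).le] using hx t ht)
      have h2 : HasDerivWithinAt (fun s => Real.exp (-κ * s)) (Real.exp (-κ * t) * (-κ)) (Icc 0 T) t := by
        have := ((hasDerivAt_id t).const_mul (-κ)).exp
        simpa using this.hasDerivWithinAt
      exact h1.mul h2
    have hmono : MonotoneOn (fun s => V (x s) * Real.exp (-κ * s)) (Icc 0 T) := by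
      refine monotoneOn_of_hasDerivWithinAt_nonneg (convex_Icc 0 T)
        (fun t ht => (hder t ht).continuousWithinAt)
        (fun t ht => (hder t (interior_subset ht)).mono interior_subset) ?_
      intro t ht
      have := hW (x t) (hcon t (interior_subset ht)).le
      have h2 := Real.exp_pos (-κ * t)
      nlinarith
    have h := hmono (left_mem_Icc.2 hT0.le) (right_mem_Icc.2 hT0.le) hT0.le
    have h3 := hM (x T) (by simpa using (hcon T (right_mem_Icc.2 hT0.le)).le)
    have h4 : V (x T) ≤ M := (le_abs_self _).trans h3
    simp only [hx0, mul_zero, Real.exp_zero, mul_one] at h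
    have h5 : Real.exp (-κ * T) * Real.exp (κ * T) = 1 := by
      rw [← Real.exp_add]; simp
    have h6 := mul_le_mul_of_nonneg_right h (Real.exp_pos (κ * T)).le
    rw [mul_assoc, h5] at h6
    linarith
  have hcomp : IsCompact (Icc 0 T ∩ {t | ε ≤ ‖x t‖}) := by
    have : IsClosed (Icc 0 T ∩ (fun t => ‖x t‖) ⁻¹' (Ici ε)) :=
      hxc.norm.preimage_isClosed_of_isClosed isClosed_Icc isClosed_Ici
    exact isCompact_Icc.of_isClosed_subset this inter_subset_left
  obtain ⟨t0, ht0, ht0'⟩ := hex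
  obtain ⟨τ, ⟨hτ, hτε⟩, hmin⟩ := hcomp.exists_isLeast ⟨t0, ht0, ht0'⟩
  change ε ≤ ‖x τ‖ at hτε
  have hτ0 : 0 < τ := by
    rcases hτ.1.eq_or_lt with h | h
    · rw [← h, hx0] at hτε; linarith
    · exact h
  have hlt : ∀ t ∈ Ico 0 τ, ‖x t‖ ≤ ε := by
    intro t ht
    by_contra! hc
    exact absurd (hmin ⟨⟨ht.1, ht.2.le.trans hτ.2⟩, hc.le⟩) (not_le.2 ht.2)
  have hle : ∀ t ∈ Icc 0 τ, ‖x t‖ ≤ ε := by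
    have hsub : Icc 0 τ ⊆ Icc 0 T := Icc_subset_Icc_right hτ.2
    have hcl : Icc 0 τ = closure (Ico 0 τ) := (closure_Ico hτ0.ne).symm
    intro t ht
    have hct : ContinuousWithinAt (fun t => ‖x t‖) (Ico 0 τ) t :=
      ((hxc.norm) t (hsub ht)).mono (Ico_subset_Icc_self.trans hsub)
    have := hct.mem_closure (hcl ▸ ht) (t := Iic ε) (fun s hs => hlt s hs)
    simpa using this
  refine ⟨τ, hτ0, x, hx0, hτε, fun t ht => ?_⟩
  have := (hx t ⟨ht.1, ht.2.trans hτ.2⟩).mono (Icc_subset_Icc_right hτ.2)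
  simpa [hgf _ (hle t ht)] using this

/-- homogeneity -/
theorem homog_pos {E : Type*} [NormedAddCommGroup E] [NormedSpace ℝ E]
    [FiniteDimensional ℝ E] (Q G : E → ℝ) (hQ : Continuous Q) (hG : Continuous G)
    (hQh : ∀ (r : ℝ) x, Q (r • x) = r ^ 2 * Q x) (hGh : ∀ (r : ℝ) x, G (r • x) = r ^ 3 * G x)
    (hpos : ∀ x, x ≠ 0 → 0 < Q x) :
    ∃ ε > 0, ∀ x, ‖x‖ ≤ ε → 0 ≤ Q x + G x := by
  have hS := isCompact_sphere (0 : E) 1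
  obtain ⟨M, hM⟩ := hS.exists_bound_of_continuousOn hG.continuousOn
  obtain ⟨c, hc, hcQ⟩ : ∃ c > 0, ∀ x ∈ Metric.sphere (0 : E) 1, c ≤ Q x := by
    rcases (Metric.sphere (0 : E) 1).eq_empty_or_nonempty with h | h
    · exact ⟨1, one_pos, by simp [h]⟩
    · obtain ⟨x, hx, hm⟩ := hS.exists_isMinOn h hQ.continuousOn
      exact ⟨Q x, hpos x (by rintro rfl; simp at hx), fun y hy => hm hy⟩
  refine ⟨c / (|M| + 1), by positivity, fun x hx => ?_⟩
  rcases eq_or_ne x 0 with rfl | h0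
  · have h1 := hQh 0 0
    have h2 := hGh 0 0
    simp at h1 h2
    simp [h1, h2]
  have hn : 0 < ‖x‖ := norm_pos_iff.2 h0
  have hu : ‖x‖⁻¹ • x ∈ Metric.sphere (0 : E) 1 := by
    simp [norm_smul, hn.ne']
  have hxe : x = ‖x‖ • (‖x‖⁻¹ • x) := by simp [smul_smul, hn.ne']
  generalize ‖x‖⁻¹ • x = u at hu hxe
  have h1 := hcQ u hu
  have h2 := (abs_le.1 (hM u hu)).1
  have h3 : -|M| ≤ -M := neg_le_neg (le_abs_self M)
  have : Q x + G x = ‖x‖ ^ 2 * (Q u + ‖x‖ * G u) := by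
    conv_lhs => rw [hxe]
    rw [hQh, hGh]; ring
  rw [this]
  rw [le_div_iff₀ (by positivity)] at hx
  have : 0 ≤ Q u + ‖x‖ * G u := by nlinarith
  positivity

/-- The Euclidean phase space. -/
abbrev E7 := EuclideanSpace ℝ (Fin 7)

/-- Quadratic part of the vector field. -/
noncomputable def nonlin (γ : ℝ) (x : E7) : E7 :=
  !₂[-(x 0) ^ 2 - x 1 * x 2,
     -(x 0 + x 3) * x 1,
     -(x 0 + x 3) * x 2,
     -(x 3) ^ 2 - x 1 * x 2,
     -2 * x 0 * x 4 - x 2 * x 5 - (γ - 1) * (x 0 + x 3) * x 4,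
     -2 * x 1 * x 4 - 2 * x 2 * x 6 - γ * (x 0 + x 3) * x 5,
     -2 * x 3 * x 6 - x 1 * x 5 - (γ - 1) * (x 0 + x 3) * x 6]

/-- Linear part of the vector field at the equilibrium. -/
noncomputable def linPart (γ l c₀ bs As : ℝ) (x : E7) : E7 :=
  !₂[-bs * x 2 + bs * x 1 + l * x 2 - 2 * c₀ * x 4,
     -bs * (x 0 + x 3) + l * x 3 - c₀ * x 5,
     bs * (x 0 + x 3) - l * x 0 - c₀ * x 5,
     bs * x 1 - bs * x 2 - l * x 1 - 2 * c₀ * x 6,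
     -2 * As * x 0 + bs * x 5 - (γ - 1) * As * (x 0 + x 3),
     -2 * bs * x 4 - 2 * As * x 1 + 2 * bs * x 6 - 2 * As * x 2,
     -2 * As * x 3 - bs * x 5 - (γ - 1) * As * (x 0 + x 3)]

/-- Polar form of the Chetaev function. -/
noncomputable def polarV (γ l c₀ bs As : ℝ) (x y : E7) : ℝ :=
  -((x 0 - x 3) * (y 4 - y 6) + (y 0 - y 3) * (x 4 - x 6)
    + (x 1 + x 2) * y 5 + (y 1 + y 2) * x 5)
  - 2 * (((2 * bs - l) ^ 2 - 4 * c₀ * γ * As) * ((x 0 + x 3) * (y 0 + y 3))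
    + ((2 * bs - l) * (x 1 - x 2) - 2 * c₀ * (x 4 + x 6))
      * ((2 * bs - l) * (y 1 - y 2) - 2 * c₀ * (y 4 + y 6))
    + ((2 * bs - l) * (x 4 + x 6) - 2 * γ * As * (x 1 - x 2))
      * ((2 * bs - l) * (y 4 + y 6) - 2 * γ * As * (y 1 - y 2)))

/-- The definite quadratic form bounding the growth of the Chetaev function. -/
noncomputable def quadQ (γ l c₀ bs As κ : ℝ) (x : E7) : ℝ :=
  2 * c₀ * ((x 4 - x 6) ^ 2 + x 5 ^ 2) + 2 * As * ((x 0 - x 3) ^ 2 + (x 1 + x 2) ^ 2)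
    + (2 * bs - l) * ((x 1 + x 2) * (x 4 - x 6) - (x 0 - x 3) * x 5)
    + κ * ((x 0 - x 3) * (x 4 - x 6) + (x 1 + x 2) * x 5)
  + κ * (((2 * bs - l) ^ 2 - 4 * c₀ * γ * As) * (x 0 + x 3) ^ 2
    + ((2 * bs - l) * (x 1 - x 2) - 2 * c₀ * (x 4 + x 6)) ^ 2
    + ((2 * bs - l) * (x 4 + x 6) - 2 * γ * As * (x 1 - x 2)) ^ 2)

theorem quadQ_pos (γ l c₀ bs As κ : ℝ) (hc₀ : 0 < c₀) (hκ : 0 < κ)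
    (hω : 0 < (2 * bs - l) ^ 2 - 4 * c₀ * γ * As)
    (hD : 0 < 16 * c₀ * As - (2 * bs - l) ^ 2 - κ ^ 2) (x : E7) (hx : x ≠ 0) :
    0 < quadQ γ l c₀ bs As κ x := by
  by_contra! hcon
  apply hx
  have hid : 8 * c₀ * quadQ γ l c₀ bs As κ x =
      (4 * c₀ * (x 4 - x 6) + (2 * bs - l) * (x 1 + x 2) + κ * (x 0 - x 3)) ^ 2
      + (4 * c₀ * x 5 - (2 * bs - l) * (x 0 - x 3) + κ * (x 1 + x 2)) ^ 2
      + (16 * c₀ * As - (2 * bs - l) ^ 2 - κ ^ 2) * (x 0 - x 3) ^ 2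
      + (16 * c₀ * As - (2 * bs - l) ^ 2 - κ ^ 2) * (x 1 + x 2) ^ 2
      + 8 * c₀ * κ * ((2 * bs - l) ^ 2 - 4 * c₀ * γ * As) * (x 0 + x 3) ^ 2
      + 8 * c₀ * κ * ((2 * bs - l) * (x 1 - x 2) - 2 * c₀ * (x 4 + x 6)) ^ 2
      + 8 * c₀ * κ * ((2 * bs - l) * (x 4 + x 6) - 2 * γ * As * (x 1 - x 2)) ^ 2 := by
    unfold quadQ; ring
  have hle : 8 * c₀ * quadQ γ l c₀ bs As κ x ≤ 0 :=
    mul_nonpos_of_nonneg_of_nonpos (by positivity) hcon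
  rw [hid] at hle
  have p1 := sq_nonneg (4 * c₀ * (x 4 - x 6) + (2 * bs - l) * (x 1 + x 2) + κ * (x 0 - x 3))
  have p2 := sq_nonneg (4 * c₀ * x 5 - (2 * bs - l) * (x 0 - x 3) + κ * (x 1 + x 2))
  have p3 := mul_nonneg hD.le (sq_nonneg (x 0 - x 3))
  have p4 := mul_nonneg hD.le (sq_nonneg (x 1 + x 2))
  have hk : 0 < 8 * c₀ * κ := by positivity
  have p5 := mul_nonneg (mul_pos hk hω).le (sq_nonneg (x 0 + x 3))
  have p6 := mul_nonneg hk.le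
    (sq_nonneg ((2 * bs - l) * (x 1 - x 2) - 2 * c₀ * (x 4 + x 6)))
  have p7 := mul_nonneg hk.le
    (sq_nonneg ((2 * bs - l) * (x 4 + x 6) - 2 * γ * As * (x 1 - x 2)))
  have aux : ∀ c y : ℝ, 0 < c → c * y ^ 2 ≤ 0 → y = 0 := by
    intro c y hc h
    by_contra hy
    have : 0 < c * y ^ 2 := by positivity
    linarith
  have e3 := aux _ (x 0 - x 3) hD (by linarith)
  have e4 := aux _ (x 1 + x 2) hD (by linarith)
  have e5 := aux _ (x 0 + x 3) (mul_pos hk hω) (by linarith)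
  have e6 := aux _ _ hk (show 8 * c₀ * κ *
    ((2 * bs - l) * (x 1 - x 2) - 2 * c₀ * (x 4 + x 6)) ^ 2 ≤ 0 by linarith)
  have e7 := aux _ _ hk (show 8 * c₀ * κ *
    ((2 * bs - l) * (x 4 + x 6) - 2 * γ * As * (x 1 - x 2)) ^ 2 ≤ 0 by linarith)
  have e1 := aux 1 (4 * c₀ * (x 4 - x 6) + (2 * bs - l) * (x 1 + x 2) + κ * (x 0 - x 3))
    one_pos (by linarith)
  have e2 := aux 1 (4 * c₀ * x 5 - (2 * bs - l) * (x 0 - x 3) + κ * (x 1 + x 2))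
    one_pos (by linarith)
  rw [e3, e4] at e1 e2
  have f1 : x 4 - x 6 = 0 := by
    have : (4 * c₀) * (x 4 - x 6) = 0 := by linarith
    exact (mul_eq_zero.1 this).resolve_left (by positivity)
  have f2 : x 5 = 0 := by
    have : (4 * c₀) * x 5 = 0 := by linarith
    exact (mul_eq_zero.1 this).resolve_left (by positivity)
  have f3 : x 1 - x 2 = 0 := by
    have : ((2 * bs - l) ^ 2 - 4 * c₀ * γ * As) * (x 1 - x 2) = 0 := by
      linear_combination (2 * bs - l) * e6 + 2 * c₀ * e7
    exact (mul_eq_zero.1 this).resolve_left hω.ne'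
  have f4 : x 4 + x 6 = 0 := by
    have : ((2 * bs - l) ^ 2 - 4 * c₀ * γ * As) * (x 4 + x 6) = 0 := by
      linear_combination (2 * γ * As) * e6 + (2 * bs - l) * e7
    exact (mul_eq_zero.1 this).resolve_left hω.ne'
  ext i
  fin_cases i <;> simp <;> linarith

/-- For `γ ∈ (1,2)`, `l > 0`, `c₀ > 0` and `b* < (1−√2)l/2` or
`b* > (1+√2)l/2`, the equilibrium `x* = (0, b*, −b*, 0, A*, 0, A*)` of (S), with
`A* = b*(b*−l)/(2c₀)`, is Lyapunov unstable: there is `ε > 0` such that for every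
`δ > 0` some solution on `[0,T]` starts within Euclidean distance `δ` of `x*` but
ends at distance `≥ ε` from it. -/
theorem stmt_14 (γ l c₀ bs : ℝ) (hγ1 : 1 < γ) (hγ2 : γ < 2) (hl : 0 < l)
    (hc₀ : 0 < c₀)
    (hbs : bs < (1 - Real.sqrt 2) * l / 2 ∨ (1 + Real.sqrt 2) * l / 2 < bs) :
    ∃ ε > 0, ∀ δ > 0, ∃ T > 0, ∃ a b c d A B C : ℝ → ℝ,
      SolvesS γ l c₀ a b c d A B C (Set.Icc 0 T) ∧
      Real.sqrt ((a 0 - 0) ^ 2 + (b 0 - bs) ^ 2 + (c 0 - (-bs)) ^ 2 + (d 0 - 0) ^ 2 +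
        (A 0 - bs * (bs - l) / (2 * c₀)) ^ 2 + (B 0 - 0) ^ 2 +
        (C 0 - bs * (bs - l) / (2 * c₀)) ^ 2) < δ ∧
      Real.sqrt ((a T - 0) ^ 2 + (b T - bs) ^ 2 + (c T - (-bs)) ^ 2 + (d T - 0) ^ 2 +
        (A T - bs * (bs - l) / (2 * c₀)) ^ 2 + (B T - 0) ^ 2 +
        (C T - bs * (bs - l) / (2 * c₀)) ^ 2) ≥ ε := by
  have hquad : 0 < 4 * (bs * (bs - l)) - l ^ 2 := by
    have h2 : Real.sqrt 2 ^ 2 = 2 := Real.sq_sqrt (by norm_num)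
    have h3 : 0 < Real.sqrt 2 := by positivity
    have h4 : 0 < Real.sqrt 2 * l := by positivity
    have h5 : (Real.sqrt 2 * l) ^ 2 = 2 * l ^ 2 := by rw [mul_pow, h2]
    rcases hbs with h | h
    · nlinarith
    · nlinarith
  have hAs : 2 * c₀ * (bs * (bs - l) / (2 * c₀)) = bs * (bs - l) := by
    field_simp
  generalize bs * (bs - l) / (2 * c₀) = As at hAs ⊢
  have hω : 0 < (2 * bs - l) ^ 2 - 4 * c₀ * γ * As := by
    have : (2 * bs - l) ^ 2 - 4 * c₀ * γ * As = l ^ 2 + (4 - 2 * γ) * (bs * (bs - l)) := by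
      linear_combination (-2 * γ) * hAs
    rw [this]
    have h1 : 0 < bs * (bs - l) := by nlinarith
    have h2 : 0 < (4 - 2 * γ) * (bs * (bs - l)) := mul_pos (by linarith) h1
    positivity
  obtain ⟨κ, hκ, hD⟩ : ∃ κ > 0, 0 < 16 * c₀ * As - (2 * bs - l) ^ 2 - κ ^ 2 := by
    have : 0 < 16 * c₀ * As - (2 * bs - l) ^ 2 := by nlinarith
    refine ⟨Real.sqrt (16 * c₀ * As - (2 * bs - l) ^ 2) / 2, by positivity, ?_⟩
    rw [div_pow, Real.sq_sqrt this.le]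
    linarith
  set V : E7 → ℝ := fun x => polarV γ l c₀ bs As x x / 2 with hVdef
  set f : E7 → E7 := fun x => linPart γ l c₀ bs As x + nonlin γ x with hfdef
  have hf : ContDiff ℝ 1 f := by
    rw [contDiff_euclidean]
    intro i
    fin_cases i <;> simp [f, linPart, nonlin] <;> fun_prop
  have hV : Continuous V := by
    simp only [hVdef, polarV]; fun_prop
  obtain ⟨ε, hε, hεQ⟩ := homog_pos (quadQ γ l c₀ bs As κ)
    (fun x => polarV γ l c₀ bs As x (nonlin γ x))
    (by unfold quadQ; fun_prop) (by simp [polarV, nonlin]; fun_prop)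
    (by intro r x; simp [quadQ]; ring) (by intro r x; simp [polarV, nonlin]; ring)
    (quadQ_pos γ l c₀ bs As κ hc₀ hκ hω hD)
  refine ⟨ε, hε, fun δ hδ => ?_⟩
  obtain ⟨x₀, hx₀, hx₀ε, hVx₀⟩ : ∃ x₀ : E7, ‖x₀‖ < δ ∧ ‖x₀‖ < ε ∧ 0 < V x₀ := by
    have hη : 0 < min δ ε / 2 := by positivity
    refine ⟨!₂[min δ ε / 2 / 2, 0, 0, -(min δ ε / 2 / 2), -(min δ ε / 2 / 2), 0,
      min δ ε / 2 / 2], ?_⟩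
    have hn : ‖(!₂[min δ ε / 2 / 2, 0, 0, -(min δ ε / 2 / 2), -(min δ ε / 2 / 2), 0,
      min δ ε / 2 / 2] : E7)‖ = min δ ε / 2 := by
      rw [EuclideanSpace.norm_eq, Real.sqrt_eq_iff_mul_self_eq_of_pos hη]
      simp [Fin.sum_univ_succ]
      ring
    have h1 := min_le_left δ ε
    have h2 := min_le_right δ ε
    refine ⟨by rw [hn]; linarith, by rw [hn]; linarith, ?_⟩
    simp [hVdef, polarV]
    nlinarith
  have hcoord : ∀ (x : ℝ → E7) (t : ℝ) (J : Set ℝ), HasDerivWithinAt x (f (x t)) J t →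
      ∀ i, HasDerivWithinAt (fun s => x s i) (f (x t) i) J t := by
    intro x t J h i
    exact (EuclideanSpace.proj (𝕜 := ℝ) i).hasFDerivAt.comp_hasDerivWithinAt t h
  obtain ⟨T, hT, x, hx0, hxT, hx⟩ := chetaev f hf V
    (fun x => polarV γ l c₀ bs As x (f x)) hV (by
      intro x t J h
      have h' := hcoord x t J h
      generalize f (x t) = y at h'
      have h0 := h' 0
      have h1 := h' 1
      have h2 := h' 2
      have h3 := h' 3
      have h4 := h' 4
      have h5 := h' 5
      have h6 := h' 6
      have hm := ((h0.sub h3).mul (h4.sub h6)).add ((h1.add h2).mul h5)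
      have hs := ((h0.add h3).pow 2).const_mul ((2 * bs - l) ^ 2 - 4 * c₀ * γ * As)
      have hh := (((h1.sub h2).const_mul (2 * bs - l)).sub ((h4.add h6).const_mul (2 * c₀))).pow 2
      have hJ := (((h4.add h6).const_mul (2 * bs - l)).sub
        ((h1.sub h2).const_mul (2 * γ * As))).pow 2
      refine ((hm.neg.sub ((hs.add hh).add hJ)).congr_deriv ?_).congr_of_eventuallyEq
        (Filter.Eventually.of_forall ?_) ?_
      · simp [polarV]; ring
      · intro s; simp [V, polarV]; ring
      · simp [V, polarV]; ring)
    κ ε hκ hε (by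
      intro x hx
      have h := hεQ x hx
      have : polarV γ l c₀ bs As x (f x) - κ * V x = quadQ γ l c₀ bs As κ x
          + polarV γ l c₀ bs As x (nonlin γ x) := by
        simp [V, f, polarV, quadQ, linPart, nonlin]; ring
      linarith) x₀ hx₀ε hVx₀
  have hnorm : ∀ y : E7, Real.sqrt (y 0 ^ 2 + y 1 ^ 2 + y 2 ^ 2 + y 3 ^ 2 + y 4 ^ 2 + y 5 ^ 2
      + y 6 ^ 2) = ‖y‖ := by
    intro y
    rw [EuclideanSpace.norm_eq]
    congr 1
    simp [Fin.sum_univ_succ]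
    ring_nf
  refine ⟨T, hT, fun t => x t 0, fun t => bs + x t 1, fun t => -bs + x t 2, fun t => x t 3,
    fun t => As + x t 4, fun t => x t 5, fun t => As + x t 6, ?_, ?_, ?_⟩
  · intro t ht
    have h' := hcoord x t _ (hx t ht)
    refine ⟨(h' 0).congr_deriv ?_, ((h' 1).const_add bs).congr_deriv ?_,
      ((h' 2).const_add (-bs)).congr_deriv ?_, (h' 3).congr_deriv ?_,
      ((h' 4).const_add As).congr_deriv ?_, (h' 5).congr_deriv ?_,
      ((h' 6).const_add As).congr_deriv ?_⟩ <;> simp [f, linPart, nonlin]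
    · linear_combination hAs
    · ring
    · ring
    · linear_combination hAs
    · ring
    · ring
    · ring
  · simp only [sub_zero, add_sub_cancel_left]
    rw [hnorm, hx0]; exact hx₀
  · simp only [sub_zero, add_sub_cancel_left]
    rw [hnorm]; exact hxT
end

section
/- Let B₀, σ, l, R₀, γ be real numbers and c₀ ≠ 0. Define on ℝ² (writing r² = x₁² + x₂²): u₁(x) = B₀σ x₂ e^(−σr²/2), u₂(x) = −B₀σ x₁ e^(−σr²/2), and Π(x) = −(1/(2c₀))·(B₀²σ e^(−σr²) − 2lB₀ e^(−σr²/2)) + R₀. Then (u₁, u₂, Π) is a stationary solution of the 2D rotating compressible system: for all x ∈ ℝ², u₁∂₁u₁ + u₂∂₂u₁ − l u₂ + c₀ ∂₁Π = 0, u₁∂₁u₂ + u₂∂₂u₂ + l u₁ + c₀ ∂₂Π = 0, and u₁∂₁Π + u₂∂₂Π + (γ−1)·Π·(∂₁u₁ + ∂₂u₂) = 0. -/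
namespace Stmt16

/-- Velocity component `u₁` of the exponentially localized vortex. -/
noncomputable def u₁ (B₀ σ : ℝ) (x y : ℝ) : ℝ :=
  B₀ * σ * y * Real.exp (-(σ * (x ^ 2 + y ^ 2)) / 2)

/-- Velocity component `u₂` of the exponentially localized vortex. -/
noncomputable def u₂ (B₀ σ : ℝ) (x y : ℝ) : ℝ :=
  -(B₀ * σ * x * Real.exp (-(σ * (x ^ 2 + y ^ 2)) / 2))

/-- Pressure variable `Π` of the exponentially localized vortex. -/
noncomputable def Pi' (B₀ σ l c₀ R₀ : ℝ) (x y : ℝ) : ℝ :=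
  -(1 / (2 * c₀)) * (B₀ ^ 2 * σ * Real.exp (-(σ * (x ^ 2 + y ^ 2))) -
    2 * l * B₀ * Real.exp (-(σ * (x ^ 2 + y ^ 2)) / 2)) + R₀

theorem hE (σ a x : ℝ) : HasDerivAt (fun s : ℝ => Real.exp (-(σ * (s ^ 2 + a)) / 2))
    (-(σ * x) * Real.exp (-(σ * (x ^ 2 + a)) / 2)) x := by
  have h := (((((hasDerivAt_id x).pow 2).add_const a).const_mul σ).neg.div_const 2).exp
  refine HasDerivAt.congr_deriv (f := fun s : ℝ => Real.exp (-(σ * (s ^ 2 + a)) / 2)) h ?_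
  change Real.exp (-(σ * (x ^ 2 + a)) / 2) * (-(σ * (((2 : ℕ) : ℝ) * x ^ (2 - 1) * 1)) / 2) = _
  push_cast
  ring

theorem exp_split (t : ℝ) : Real.exp (-t) = Real.exp (-t / 2) ^ 2 := by
  rw [← Real.exp_nat_mul]
  congr 1
  push_cast
  ring

/-- The exponentially decaying vortex
`u₁ = B₀σ x₂ e^(−σr²/2)`, `u₂ = −B₀σ x₁ e^(−σr²/2)`,
`Π = −(1/(2c₀))(B₀²σ e^(−σr²) − 2lB₀ e^(−σr²/2)) + R₀`
is a stationary solution of the 2D rotating compressible system. -/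
theorem stmt_16 (B₀ σ l R₀ γ c₀ : ℝ) (hc₀ : c₀ ≠ 0) :
    ∀ x y : ℝ,
      u₁ B₀ σ x y * deriv (fun s => u₁ B₀ σ s y) x +
        u₂ B₀ σ x y * deriv (fun s => u₁ B₀ σ x s) y -
        l * u₂ B₀ σ x y + c₀ * deriv (fun s => Pi' B₀ σ l c₀ R₀ s y) x = 0 ∧
      u₁ B₀ σ x y * deriv (fun s => u₂ B₀ σ s y) x +
        u₂ B₀ σ x y * deriv (fun s => u₂ B₀ σ x s) y +
        l * u₁ B₀ σ x y + c₀ * deriv (fun s => Pi' B₀ σ l c₀ R₀ x s) y = 0 ∧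
      u₁ B₀ σ x y * deriv (fun s => Pi' B₀ σ l c₀ R₀ s y) x +
        u₂ B₀ σ x y * deriv (fun s => Pi' B₀ σ l c₀ R₀ x s) y +
        (γ - 1) * Pi' B₀ σ l c₀ R₀ x y *
          (deriv (fun s => u₁ B₀ σ s y) x + deriv (fun s => u₂ B₀ σ x s) y) = 0 := by
  intro x y
  have e1 := hE σ (y ^ 2) x
  have e2 : HasDerivAt (fun s : ℝ => Real.exp (-(σ * (x ^ 2 + s ^ 2)) / 2))
      (-(σ * y) * Real.exp (-(σ * (x ^ 2 + y ^ 2)) / 2)) y := by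
    have h := hE σ (x ^ 2) y
    simp only [add_comm _ (x ^ 2)] at h
    exact h
  have a1 := (e1.const_mul (B₀ * σ * y)).deriv
  have a2 := (((hasDerivAt_id y).const_mul (B₀ * σ)).mul e2).deriv
  have b1 := (((hasDerivAt_id x).const_mul (B₀ * σ)).mul e1).neg.deriv
  have b2 := (e2.const_mul (B₀ * σ * x)).neg.deriv
  have p1 := (((((e1.pow 2).const_mul (B₀ ^ 2 * σ)).sub
    (e1.const_mul (2 * l * B₀))).const_mul (-(1 / (2 * c₀)))).add_const R₀).deriv
  have p2 := (((((e2.pow 2).const_mul (B₀ ^ 2 * σ)).sub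
    (e2.const_mul (2 * l * B₀))).const_mul (-(1 / (2 * c₀)))).add_const R₀).deriv
  have A1 : deriv (fun s => u₁ B₀ σ s y) x = _ := a1
  have A2 : deriv (fun s => u₁ B₀ σ x s) y = _ := a2
  have B1 : deriv (fun s => u₂ B₀ σ s y) x = _ := b1
  have B2 : deriv (fun s => u₂ B₀ σ x s) y = _ := b2
  have q1 : (fun s => Pi' B₀ σ l c₀ R₀ s y) = fun s =>
      -(1 / (2 * c₀)) * (B₀ ^ 2 * σ * Real.exp (-(σ * (s ^ 2 + y ^ 2)) / 2) ^ 2 -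
        2 * l * B₀ * Real.exp (-(σ * (s ^ 2 + y ^ 2)) / 2)) + R₀ := by
    funext s
    rw [Pi', exp_split]
  have P1 : deriv (fun s => Pi' B₀ σ l c₀ R₀ s y) x = _ := (congrArg (fun f => deriv f x) q1).trans p1
  have q2 : (fun s => Pi' B₀ σ l c₀ R₀ x s) = fun s =>
      -(1 / (2 * c₀)) * (B₀ ^ 2 * σ * Real.exp (-(σ * (x ^ 2 + s ^ 2)) / 2) ^ 2 -
        2 * l * B₀ * Real.exp (-(σ * (x ^ 2 + s ^ 2)) / 2)) + R₀ := by
    funext s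
    rw [Pi', exp_split]
  have P2 : deriv (fun s => Pi' B₀ σ l c₀ R₀ x s) y = _ := (congrArg (fun f => deriv f y) q2).trans p2
  rw [A1, A2, B1, B2, P1, P2]
  simp only [u₁, u₂, Pi', exp_split, id]
  generalize Real.exp (-(σ * (x ^ 2 + y ^ 2)) / 2) = E
  refine ⟨?_, ?_, ?_⟩ <;> field_simp <;> push_cast <;> ring

end Stmt16
end

section
/- Let B₀, σ, l, R₀, γ, q be real numbers with σ > 0, q > 0 and c₀ ≠ 0. Define on ℝ² (writing r² = x₁² + x₂² and P = 1 + σr²/2): u₁(x) = B₀σ x₂ P^(−q−1), u₂(x) = −B₀σ x₁ P^(−q−1), and Π(x) = (1/c₀)·[ (B₀ l / q)·P^(−q) − (B₀²σ/(2q+1))·P^(−2q−1) ] + R₀. Then (u₁, u₂, Π) is a stationary solution of the 2D rotating compressible system: for all x ∈ ℝ², u₁∂₁u₁ + u₂∂₂u₁ − l u₂ + c₀ ∂₁Π = 0, u₁∂₁u₂ + u₂∂₂u₂ + l u₁ + c₀ ∂₂Π = 0, and u₁∂₁Π + u₂∂₂Π + (γ−1)·Π·(∂₁u₁ + ∂₂u₂)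 = 0. -/
namespace Stmt17

/-- `P = 1 + σ r² / 2`. -/
noncomputable def P (σ : ℝ) (x y : ℝ) : ℝ := 1 + σ * (x ^ 2 + y ^ 2) / 2

/-- Velocity component `u₁` of the power-law localized vortex. -/
noncomputable def u₁ (B₀ σ q : ℝ) (x y : ℝ) : ℝ :=
  B₀ * σ * y * P σ x y ^ (-(q + 1))

/-- Velocity component `u₂` of the power-law localized vortex. -/
noncomputable def u₂ (B₀ σ q : ℝ) (x y : ℝ) : ℝ :=
  -(B₀ * σ * x * P σ x y ^ (-(q + 1)))

/-- Pressure variable `Π` of the power-law localized vortex. -/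
noncomputable def Pi' (B₀ σ l c₀ R₀ q : ℝ) (x y : ℝ) : ℝ :=
  (1 / c₀) * (B₀ * l / q * P σ x y ^ (-q) -
    B₀ ^ 2 * σ / (2 * q + 1) * P σ x y ^ (-(2 * q + 1))) + R₀

theorem P_pos (σ x y : ℝ) (hσ : 0 < σ) : 0 < P σ x y := by
  unfold P
  positivity

theorem P_comm (σ x y : ℝ) : P σ x y = P σ y x := by
  unfold P
  ring

theorem hasDerivAt_P_rpow (σ a x y : ℝ) (hσ : 0 < σ) :
    HasDerivAt (fun s => P σ s y ^ a) (a * σ * x * P σ x y ^ (a - 1)) x := by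
  have h1 : HasDerivAt (fun s => P σ s y) (σ * x) x := by
    unfold P
    have h := (((((hasDerivAt_id x).pow 2).add_const (y ^ 2)).const_mul σ).div_const 2).const_add 1
    refine h.congr_deriv ?_
    simp
    ring
  refine (h1.rpow_const (p := a) (Or.inl (P_pos σ x y hσ).ne')).congr_deriv ?_
  ring

theorem hasDerivAt_P_rpow' (σ a x y : ℝ) (hσ : 0 < σ) :
    HasDerivAt (fun s => P σ x s ^ a) (a * σ * y * P σ x y ^ (a - 1)) y := by
  have h := hasDerivAt_P_rpow σ a y x hσ
  rw [P_comm σ y x] at h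
  refine h.congr_of_eventuallyEq (Filter.Eventually.of_forall fun s => ?_)
  simp only [P_comm σ x s]

/-- The power-law decaying vortex
`u₁ = B₀σ x₂ P^(−q−1)`, `u₂ = −B₀σ x₁ P^(−q−1)`,
`Π = (1/c₀)[(B₀ l/q) P^(−q) − (B₀²σ/(2q+1)) P^(−2q−1)] + R₀`, with `P = 1 + σr²/2`,
is a stationary solution of the 2D rotating compressible system. -/
theorem stmt_17 (B₀ σ l R₀ γ q c₀ : ℝ) (hσ : 0 < σ) (hq : 0 < q) (hc₀ : c₀ ≠ 0) :
    ∀ x y : ℝ,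
      u₁ B₀ σ q x y * deriv (fun s => u₁ B₀ σ q s y) x +
        u₂ B₀ σ q x y * deriv (fun s => u₁ B₀ σ q x s) y -
        l * u₂ B₀ σ q x y + c₀ * deriv (fun s => Pi' B₀ σ l c₀ R₀ q s y) x = 0 ∧
      u₁ B₀ σ q x y * deriv (fun s => u₂ B₀ σ q s y) x +
        u₂ B₀ σ q x y * deriv (fun s => u₂ B₀ σ q x s) y +
        l * u₁ B₀ σ q x y + c₀ * deriv (fun s => Pi' B₀ σ l c₀ R₀ q x s) y = 0 ∧
      u₁ B₀ σ q x y * deriv (fun s => Pi' B₀ σ l c₀ R₀ q s y) x +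
        u₂ B₀ σ q x y * deriv (fun s => Pi' B₀ σ l c₀ R₀ q x s) y +
        (γ - 1) * Pi' B₀ σ l c₀ R₀ q x y *
          (deriv (fun s => u₁ B₀ σ q s y) x + deriv (fun s => u₂ B₀ σ q x s) y) = 0 := by
  intro x y
  have hP := P_pos σ x y hσ
  have hq' : q ≠ 0 := hq.ne'
  have hq2 : 2 * q + 1 ≠ 0 := by positivity
  have e1 : P σ x y ^ (-q - 1) = P σ x y ^ (-(q + 1)) := by
    congr 1; ring
  have e2 : P σ x y ^ (-(2 * q + 1) - 1) = P σ x y ^ (-(q + 1)) * P σ x y ^ (-(q + 1)) := by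
    rw [← Real.rpow_add hP]; congr 1; ring
  have d11 : deriv (fun s => u₁ B₀ σ q s y) x
      = B₀ * σ * y * (-(q + 1) * σ * x * P σ x y ^ (-(q + 1) - 1)) :=
    ((hasDerivAt_P_rpow σ (-(q + 1)) x y hσ).const_mul (B₀ * σ * y)).deriv
  have d12 : deriv (fun s => u₁ B₀ σ q x s) y
      = B₀ * σ * P σ x y ^ (-(q + 1))
        + B₀ * σ * y * (-(q + 1) * σ * y * P σ x y ^ (-(q + 1) - 1)) := by
    have h := (((hasDerivAt_id y).const_mul (B₀ * σ)).mul
      (hasDerivAt_P_rpow' σ (-(q + 1)) x y hσ)).deriv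
    simp only [id, mul_one] at h
    exact h
  have d21 : deriv (fun s => u₂ B₀ σ q s y) x
      = -(B₀ * σ * P σ x y ^ (-(q + 1))
        + B₀ * σ * x * (-(q + 1) * σ * x * P σ x y ^ (-(q + 1) - 1))) := by
    have h := (((hasDerivAt_id x).const_mul (B₀ * σ)).mul
      (hasDerivAt_P_rpow σ (-(q + 1)) x y hσ)).neg.deriv
    simp only [id, mul_one] at h
    exact h
  have d22 : deriv (fun s => u₂ B₀ σ q x s) y
      = -(B₀ * σ * x * (-(q + 1) * σ * y * P σ x y ^ (-(q + 1) - 1))) :=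
    ((hasDerivAt_P_rpow' σ (-(q + 1)) x y hσ).const_mul (B₀ * σ * x)).neg.deriv
  have dp1 : deriv (fun s => Pi' B₀ σ l c₀ R₀ q s y) x
      = 1 / c₀ * (B₀ ^ 2 * σ ^ 2 * x * (P σ x y ^ (-(q + 1)) * P σ x y ^ (-(q + 1)))
        - B₀ * l * σ * x * P σ x y ^ (-(q + 1))) := by
    have h := (((((hasDerivAt_P_rpow σ (-q) x y hσ).const_mul (B₀ * l / q)).sub
      ((hasDerivAt_P_rpow σ (-(2 * q + 1)) x y hσ).const_mul
        (B₀ ^ 2 * σ / (2 * q + 1)))).const_mul (1 / c₀)).add_const R₀).deriv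
    rw [e1, e2] at h
    refine Eq.trans h ?_
    field_simp
    ring
  have dp2 : deriv (fun s => Pi' B₀ σ l c₀ R₀ q x s) y
      = 1 / c₀ * (B₀ ^ 2 * σ ^ 2 * y * (P σ x y ^ (-(q + 1)) * P σ x y ^ (-(q + 1)))
        - B₀ * l * σ * y * P σ x y ^ (-(q + 1))) := by
    have h := (((((hasDerivAt_P_rpow' σ (-q) x y hσ).const_mul (B₀ * l / q)).sub
      ((hasDerivAt_P_rpow' σ (-(2 * q + 1)) x y hσ).const_mul
        (B₀ ^ 2 * σ / (2 * q + 1)))).const_mul (1 / c₀)).add_const R₀).deriv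
    rw [e1, e2] at h
    refine Eq.trans h ?_
    field_simp
    ring
  rw [d11, d12, d21, d22, dp1, dp2]
  unfold u₁ u₂
  generalize P σ x y ^ (-(q + 1) - 1) = C
  generalize P σ x y ^ (-(q + 1)) = A
  generalize Pi' B₀ σ l c₀ R₀ q x y = D
  have hc : c₀ * (1 / c₀) = 1 := by field_simp
  refine ⟨?_, ?_, ?_⟩
  · rw [← mul_assoc c₀, hc]; ring
  · rw [← mul_assoc c₀, hc]; ring
  · ring

end Stmt17
end

section
/- Let ω : ℝ → ℝ be a differentiable function and define the vector field U on ℝ² by U(x) = ω(x₁² + x₂²)·(x₂, −x₁). Then for all x ∈ ℝ²: (i) div U(x) = ∂₁u₁(x) + ∂₂u₂(x) = 0, and (ii) the convective derivative satisfies ((U·∇)U)(x) = (u₁∂₁u₁ + u₂∂₂u₁, u₁∂₁u₂ + u₂∂₂u₂)(x) = −ω(x₁² + x₂²)²·(x₁, x₂). -/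
/-- For a differentiable `ω : ℝ → ℝ`, the radial swirl field
`U(x) = ω(x₁² + x₂²) (x₂, −x₁)`, i.e. `u₁(x,y) = ω(x²+y²) y`, `u₂(x,y) = −ω(x²+y²) x`,
is divergence free and its self-advection is the centripetal field
`(U·∇)U = −ω(x²+y²)² (x₁, x₂)`. -/
theorem stmt_18 (ω : ℝ → ℝ) (hω : Differentiable ℝ ω) :
    let u₁ : ℝ → ℝ → ℝ := fun x y => ω (x ^ 2 + y ^ 2) * y
    let u₂ : ℝ → ℝ → ℝ := fun x y => -(ω (x ^ 2 + y ^ 2) * x)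
    ∀ x y : ℝ,
      deriv (fun s => u₁ s y) x + deriv (fun s => u₂ x s) y = 0 ∧
      u₁ x y * deriv (fun s => u₁ s y) x + u₂ x y * deriv (fun s => u₁ x s) y =
        -(ω (x ^ 2 + y ^ 2)) ^ 2 * x ∧
      u₁ x y * deriv (fun s => u₂ s y) x + u₂ x y * deriv (fun s => u₂ x s) y =
        -(ω (x ^ 2 + y ^ 2)) ^ 2 * y := by
  intro u₁ u₂ x y
  have hx : HasDerivAt (fun s => ω (s ^ 2 + y ^ 2))
      (deriv ω (x ^ 2 + y ^ 2) * (2 * x)) x := by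
    have h : HasDerivAt (fun s : ℝ => s ^ 2 + y ^ 2) (2 * x) x := by
      simpa using (hasDerivAt_pow 2 x).add_const (y ^ 2)
    exact (hω (x ^ 2 + y ^ 2)).hasDerivAt.comp x h
  have hy : HasDerivAt (fun s => ω (x ^ 2 + s ^ 2))
      (deriv ω (x ^ 2 + y ^ 2) * (2 * y)) y := by
    have h : HasDerivAt (fun s : ℝ => x ^ 2 + s ^ 2) (2 * y) y := by
      simpa using (hasDerivAt_pow 2 y).const_add (x ^ 2)
    exact (hω (x ^ 2 + y ^ 2)).hasDerivAt.comp y h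
  have h1 : deriv (fun s => u₁ s y) x = _ := (hx.mul_const y).deriv
  have h2 : deriv (fun s => u₁ x s) y = _ := (hy.mul (hasDerivAt_id y)).deriv
  have h3 : deriv (fun s => u₂ s y) x = _ := (hx.mul (hasDerivAt_id x)).neg.deriv
  have h4 : deriv (fun s => u₂ x s) y = _ := (hy.mul_const x).neg.deriv
  rw [h1, h2, h3, h4]
  simp only [u₁, u₂, id]
  refine ⟨by ring, by ring, by ring⟩
end
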